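/- Under Conditions (A)–(D) with b_j ≠ 0 for all j ≥ 1, denote by ζ_k(u) the occupation measure k⁻¹ Σ_{n=0}^{k−1} δ_{u_n} of the trajectory issued from the deterministic point u ∈ 𝒜, and by 𝜻_k(u) = k⁻¹ Σ_{n=0}^{k−1} δ_{(u_j, j ≥ n)} the corresponding measures on 𝐇 = H^{ℤ₊}. Then the uniform large deviation principle holds for the families {ζ_k(u), u ∈ 𝒜} and {𝜻_k(u), u ∈ 𝒜} with the good rate functions I and 𝐈 of the non-uniform LDPs: for every Borel Γ, −I(int Γ) ≤ liminf_{k→∞} k⁻¹ log inf_{u∈𝒜} ℙ{ζ_k(u) ∈ Γ} ≤ limsup_{k→∞} k⁻¹ log sup_{u∈𝒜} ℙ{ζ_k(u) ∈ Γ} ≤ −I(cl Γ), where I(Λ) = inf_{σ∈Λ} I(σ), and similarly for 𝜻_k(u) with 𝐈. -/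

import Mathlib

open MeasureTheory ProbabilityTheory Filter Topology BoundedContinuousFunction
open scoped ENNReal NNReal Pointwise

noncomputable section

/-- The sets `𝒜_k(B)`: `𝒜_0(B) = B`, `𝒜_k(B) = S(𝒜_{k-1}(B)) + 𝒦`. -/
def attain {H : Type*} [AddCommGroup H] (S : H → H) (K : Set H) (B : Set H) : ℕ → Set H
  | 0 => B
  | n + 1 => S '' attain S K B n + K

/-- The domain of attainability `𝒜(B)` from `B`: the closure of `⋃_k 𝒜_k(B)`. -/
def attainDom {H : Type*} [AddCommGroup H] [TopologicalSpace H]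
    (S : H → H) (K : Set H) (B : Set H) : Set H :=
  closure (⋃ n, attain S K B n)

variable {H : Type} [NormedAddCommGroup H] [InnerProductSpace ℝ H] [CompleteSpace H]

/-- The orthogonal projection `𝖯_N` onto the span of the first `N` vectors of an orthonormal
basis. -/
def projB (e : HilbertBasis ℕ ℝ H) (N : ℕ) (u : H) : H :=
  ∑ j ∈ Finset.range N, e.repr u j • (e j : H)

/-- Condition (A): regularity and stability. -/
def CondA (S : H → H) : Prop :=
  ContDiff ℝ 1 S ∧
  ∀ R r : ℝ, 0 < r → r < R →
    ∃ C : ℝ, 0 < C ∧ ∃ a : ℝ, 0 < a ∧ a < 1 ∧ ∃ n₀ : ℕ, 1 ≤ n₀ ∧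
      (∀ u₁ ∈ Metric.closedBall (0 : H) R, ∀ u₂ ∈ Metric.closedBall (0 : H) R,
          ‖S u₁ - S u₂‖ ≤ C * ‖u₁ - u₂‖) ∧
      ∀ u ∈ Metric.closedBall (0 : H) R, ∀ n : ℕ, n₀ ≤ n →
          ‖S^[n] u‖ ≤ max (a * ‖u‖) r

/-- Condition (B): dissipativity. -/
def CondB (S : H → H) (K : Set H) : Prop :=
  ∃ ρ : ℝ, 0 < ρ ∧ ∃ k₀ : ℝ → ℕ, Monotone k₀ ∧
    ∀ R : ℝ, 0 ≤ R → ∀ k : ℕ, k₀ R ≤ k →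
      attain S K (Metric.closedBall 0 R) k ⊆ Metric.closedBall (0 : H) ρ

/-- Condition (C): squeezing. -/
def CondC (S : H → H) (e : HilbertBasis ℕ ℝ H) : Prop :=
  ∀ R : ℝ, 0 < R → ∃ γ : ℕ → ℝ, (∀ N, 0 < γ N) ∧ Antitone γ ∧
    Tendsto γ atTop (𝓝 0) ∧
    ∀ N : ℕ, ∀ u₁ ∈ Metric.closedBall (0 : H) R, ∀ u₂ ∈ Metric.closedBall (0 : H) R,
      ‖(S u₁ - S u₂) - projB e N (S u₁ - S u₂)‖ ≤ γ N * ‖u₁ - u₂‖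

/-- Condition (D): structure of the noise, `η_k = ∑_j b_j ξ_{jk} e_j` with `∑ b_j² < ∞`,
independent scalar `ξ_{jk}` whose laws have Lipschitz densities `p_j` with `p_j(0) > 0` and
support in `[-1,1]`. -/
def CondD [MeasurableSpace H] {Ω : Type*} [MeasurableSpace Ω] (P : Measure Ω)
    (e : HilbertBasis ℕ ℝ H) (η : ℕ → Ω → H)
    (b : ℕ → ℝ) (ξ : ℕ → ℕ → Ω → ℝ) (p : ℕ → ℝ → ℝ) : Prop :=
  (∀ j, 0 ≤ b j) ∧ Summable (fun j => (b j) ^ 2) ∧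
  (∀ k ω, HasSum (fun j => (b j * ξ j k ω) • (e j : H)) (η k ω)) ∧
  (∀ j k, Measurable (ξ j k)) ∧
  iIndepFun (fun jk : ℕ × ℕ => ξ jk.1 jk.2) P ∧
  (∀ j k, Measure.map (ξ j k) P
      = (volume : Measure ℝ).withDensity fun x => ENNReal.ofReal (p j x)) ∧
  (∀ j, ∃ L : ℝ≥0, LipschitzWith L (p j)) ∧
  (∀ j, 0 < p j 0) ∧
  (∀ j, Function.support (p j) ⊆ Set.Icc (-1 : ℝ) 1)

/-- The trajectory `u_k = S(u_{k-1}) + η_k` of the random dynamical system issued from `u₀`. -/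
def traj {Ω : Type*} (S : H → H) (η : ℕ → Ω → H) (u₀ : Ω → H) : ℕ → Ω → H
  | 0 => u₀
  | k + 1 => fun ω => S (traj S η u₀ k ω) + η (k + 1) ω

/-- The (topological) support of a measure. -/
def msupp {X : Type*} [TopologicalSpace X] [MeasurableSpace X] (μ : Measure X) : Set X :=
  {x | ∀ U ∈ 𝓝 x, 0 < μ U}

/-- The occupation measures `ζ_k = k⁻¹ ∑_{n=0}^{k-1} δ_{x_n}` of a sequence. -/
def occ {X : Type*} [MeasurableSpace X] (x : ℕ → X) (k : ℕ) : ProbabilityMeasure X :=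
  if hk : k = 0 then ⟨Measure.dirac (x 0), Measure.dirac.isProbabilityMeasure⟩
  else
    ⟨(k : ℝ≥0∞)⁻¹ • ∑ n ∈ Finset.range k, Measure.dirac (x n), by
      refine ⟨?_⟩
      simp only [Measure.smul_apply, Measure.finset_sum_apply, measure_univ,
        Finset.sum_const, Finset.card_range, nsmul_eq_mul, mul_one, smul_eq_mul]
      exact ENNReal.inv_mul_cancel (Nat.cast_ne_zero.mpr hk) (ENNReal.natCast_ne_top k)⟩

/-- Large deviation principle for the sequence of events `prob k` (the laws of random
probability measures in `Z`), with rate function `I`. -/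
def LDPof {Z : Type*} [TopologicalSpace Z] (prob : ℕ → Set Z → ℝ≥0∞) (I : Z → ℝ≥0∞) : Prop :=
  (∀ F : Set Z, IsClosed F →
    Filter.limsup (fun k : ℕ => (((k : ℝ)⁻¹ : ℝ) : EReal) * ENNReal.log (prob k F)) atTop
      ≤ -(⨅ σ ∈ F, (I σ : EReal))) ∧
  (∀ G : Set Z, IsOpen G →
    -(⨅ σ ∈ G, (I σ : EReal))
      ≤ Filter.liminf (fun k : ℕ => (((k : ℝ)⁻¹ : ℝ) : EReal) * ENNReal.log (prob k G)) atTop)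

/-- A good rate function: lower semicontinuous with compact level sets. -/
def GoodRate {Z : Type*} [TopologicalSpace Z] (I : Z → ℝ≥0∞) : Prop :=
  LowerSemicontinuous I ∧ ∀ c : ℝ≥0∞, c ≠ ⊤ → IsCompact {σ : Z | I σ ≤ c}

/-- Uniform large deviation principle for a family of random probability measures indexed by
initial points: for every `Γ`, `-I(int Γ) ≤ liminf k⁻¹ log inf_u ℙ{ζ_k(u) ∈ Γ}` and
`limsup k⁻¹ log sup_u ℙ{ζ_k(u) ∈ Γ} ≤ -I(cl Γ)`. -/
def UnifLDPof {Z : Type*} [TopologicalSpace Z]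
    (probInf probSup : ℕ → Set Z → ℝ≥0∞) (I : Z → ℝ≥0∞) : Prop :=
  ∀ Γ : Set Z,
    (-(⨅ σ ∈ interior Γ, (I σ : EReal))
        ≤ Filter.liminf
            (fun k : ℕ => (((k : ℝ)⁻¹ : ℝ) : EReal) * ENNReal.log (probInf k Γ)) atTop) ∧
    (Filter.limsup
        (fun k : ℕ => (((k : ℝ)⁻¹ : ℝ) : EReal) * ENNReal.log (probSup k Γ)) atTop
      ≤ -(⨅ σ ∈ closure Γ, (I σ : EReal)))

/-!
The starting point is a Harnack inequality: the expectation of the exponential of an additive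
functional of the path is, up to a factor subexponential in time, the same from every point of `𝒜`.
Translating the noise along finitely many basis vectors couples the chains issued from two nearby
points at a total variation cost proportional to their distance, so the squeezing property makes
them converge geometrically; irreducibility carries the comparison over to distant points. The
minimal expectations are then almost supermultiplicative in time, and Fekete's lemma gives growth
rates `ψ` for the exponentials `exp (φ (∑ n < k, W (x n, x (n + 1), …)))` with `φ` superadditive
and `1`-Lipschitz.

For `φ = id` the growth rate is the pressure, and the upper bound follows by Chebyshev's inequality
and compactness. For the lower bound, `φ = -‖·‖` measures how likely the empirical averages are to
be near their target. The growth rate is concave under translations of `W`, so Hahn–Banach bounds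
it from below by the pressure of a single linear functional. This minimax step replaces tilting by
eigenfunctions of the Feynman–Kac semigroup.
-/

/-! ### Exponentials in `ℝ≥0∞` -/

/-- The real exponential as a map into `ℝ≥0∞`, where expectations of path functionals live. -/
def expENN (x : ℝ) : ℝ≥0∞ := ENNReal.ofReal (Real.exp x)

lemma expENN_add (x y : ℝ) : expENN (x + y) = expENN x * expENN y := by
  rw [expENN, Real.exp_add, ENNReal.ofReal_mul (Real.exp_pos x).le, expENN, expENN]

lemma expENN_le_expENN {x y : ℝ} : expENN x ≤ expENN y ↔ x ≤ y := by
  rw [expENN, expENN, ENNReal.ofReal_le_ofReal_iff (Real.exp_pos y).le, Real.exp_le_exp]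

lemma expENN_zero : expENN 0 = 1 := by simp [expENN]

lemma expENN_ne_top (x : ℝ) : expENN x ≠ ⊤ := ENNReal.ofReal_ne_top

lemma expENN_pos (x : ℝ) : 0 < expENN x := ENNReal.ofReal_pos.2 (Real.exp_pos x)

lemma expENN_mul_expENN_neg (x : ℝ) : expENN x * expENN (-x) = 1 := by
  rw [← expENN_add, add_neg_cancel, expENN_zero]

lemma expENN_neg_mul_le_iff {x : ℝ} {a b : ℝ≥0∞} :
    expENN (-x) * a ≤ b ↔ a ≤ expENN x * b := by
  have hcancel (c : ℝ≥0∞) : expENN x * (expENN (-x) * c) = c := by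
    rw [← mul_assoc, expENN_mul_expENN_neg, one_mul]
  rw [← ENNReal.mul_le_mul_iff_right (expENN_pos x).ne' (expENN_ne_top x), hcancel]

lemma expENN_log {r : ℝ} (hr : 0 < r) : expENN (Real.log r) = ENNReal.ofReal r := by
  rw [expENN, Real.exp_log hr]

lemma exists_eq_expENN {a : ℝ≥0∞} (h0 : a ≠ 0) (h1 : a ≠ ⊤) : ∃ x, a = expENN x :=
  ⟨Real.log a.toReal, by rw [expENN_log (ENNReal.toReal_pos h0 h1), ENNReal.ofReal_toReal h1]⟩

lemma exists_expENN_neg_le {a : ℝ≥0∞} (ha : 0 < a) : ∃ c, expENN (-c) ≤ a := by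
  obtain ⟨x, hx⟩ := exists_eq_expENN (lt_min ha one_pos).ne'
    (ne_top_of_le_ne_top ENNReal.one_ne_top (min_le_right a 1))
  exact ⟨-x, by rw [neg_neg, ← hx]; exact min_le_left a 1⟩

lemma natCast_le_expENN (n : ℕ) : (n : ℝ≥0∞) ≤ expENN n := by
  rw [expENN, ← ENNReal.ofReal_natCast]
  exact ENNReal.ofReal_le_ofReal (by linarith [Real.add_one_le_exp (n : ℝ)])

lemma measurable_expENN : Measurable expENN :=
  ENNReal.measurable_ofReal.comp Real.measurable_exp

/-! ### Paths driven by independent noise -/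

section Path

variable {E : Type*}

/-- The sequence `u, x 0, x 1, …`. -/
def prepend (u : E) (x : ℕ → E) : ℕ → E
  | 0 => u
  | n + 1 => x n

/-- The shift `x 1, x 2, …` of a sequence. -/
def seqShift (x : ℕ → E) : ℕ → E := fun n => x (n + 1)

lemma seqShift_iterate (n : ℕ) (x : ℕ → E) : seqShift^[n] x = fun j => x (n + j) := by
  induction n generalizing x with
  | zero => simp
  | succ n ih =>
    funext j
    rw [Function.iterate_succ_apply, ih]
    exact congrArg x (Nat.add_right_comm n j 1)

lemma prepend_mem {A : Set E} {u : E} (hu : u ∈ A) {x : ℕ → E} (hx : ∀ n, x n ∈ A) :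
    ∀ n, prepend u x n ∈ A
  | 0 => hu
  | n + 1 => hx n

lemma continuous_seqShift [TopologicalSpace E] : Continuous (seqShift : (ℕ → E) → ℕ → E) :=
  continuous_pi fun n => continuous_apply (n + 1)

lemma measurable_seqShift [MeasurableSpace E] : Measurable (seqShift : (ℕ → E) → ℕ → E) :=
  measurable_pi_lambda _ fun n => measurable_pi_apply (n + 1)

lemma measurable_prepend [MeasurableSpace E] :
    Measurable fun p : E × (ℕ → E) => prepend p.1 p.2 := by
  refine measurable_pi_lambda _ fun n => ?_
  cases n with
  | zero => exact measurable_fst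
  | succ n => exact (measurable_pi_apply n).comp measurable_snd

lemma measurable_prepend_left [MeasurableSpace E] (u : E) : Measurable (prepend u) :=
  measurable_prepend.comp measurable_prodMk_left

lemma prod_infinitePi_map_prepend [MeasurableSpace E] (μ : Measure E) [IsProbabilityMeasure μ] :
    (μ.prod (Measure.infinitePi fun _ : ℕ => μ)).map (fun p => prepend p.1 p.2) =
      Measure.infinitePi fun _ : ℕ => μ := by
  classical
  refine Measure.eq_infinitePi _ fun s t ht => ?_
  obtain ⟨n, hn⟩ := s.exists_nat_subset_range
  have hs : s ⊆ Finset.range (n + 1) :=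
    hn.trans (Finset.range_subset_range.2 n.le_succ)
  let side : ℕ → Set E := fun i => if i ∈ s then t i else Set.univ
  have hside (i : ℕ) : MeasurableSet (side i) := by
    by_cases hi : i ∈ s <;> simp [side, hi, ht i]
  have hbox : (fun p : E × (ℕ → E) => prepend p.1 p.2) ⁻¹' Set.pi s t =
      side 0 ×ˢ Set.pi (Finset.range n) fun i => side (i + 1) := by
    ext ⟨u, x⟩
    have hall : prepend u x ∈ Set.pi s t ↔ ∀ i < n + 1, prepend u x i ∈ side i := by
      refine ⟨fun h i _ => ?_, fun h i hi => ?_⟩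
      · by_cases hi : i ∈ s
        · simpa [side, hi] using h i hi
        · simp [side, hi]
      · have := h i (Finset.mem_range.1 (hs hi))
        rwa [show side i = t i from if_pos hi] at this
    rw [Set.mem_preimage, hall, Nat.forall_lt_succ_left]
    simp [prepend, Set.mem_pi]
  rw [Measure.map_apply measurable_prepend (.pi s.countable_toSet fun i _ => ht i), hbox,
    Measure.prod_prod, Measure.infinitePi_pi _ fun i _ => hside (i + 1), mul_comm,
    ← Finset.prod_range_succ' (fun i => μ (side i)), ← Finset.prod_subset hs]
  · exact Finset.prod_congr rfl fun i hi => by simp [side, hi]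
  · intro i _ hi
    simp [side, hi]

/-- The path `x 0 = u`, `x (n + 1) = S (x n) + y n` driven by the noise `y`. -/
def path [Add E] (S : E → E) (u : E) (y : ℕ → E) : ℕ → E
  | 0 => u
  | n + 1 => S (path S u y n) + y n

/-- Expectation of the path functional `g` for the chain `u ↦ S u + h` issued from `u`, the
increments `h` being independent with law `μ`. -/
def pathExp [Add E] [MeasurableSpace E] (S : E → E) (μ : Measure E) (u : E)
    (g : (ℕ → E) → ℝ≥0∞) : ℝ≥0∞ :=
  ∫⁻ y, g (path S u y) ∂Measure.infinitePi fun _ : ℕ => μ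

lemma path_prepend [Add E] (S : E → E) (u h : E) (y : ℕ → E) :
    path S u (prepend h y) = prepend u (path S (S u + h) y) := by
  funext n
  induction n with
  | zero => rfl
  | succ n ih =>
    rw [path, ih]
    cases n <;> rfl

variable [Add E] [MeasurableSpace E] {S : E → E} {μ : Measure E} {u : E}
  {g g' : (ℕ → E) → ℝ≥0∞}

lemma pathExp_const_mul {c : ℝ≥0∞} (hc : c ≠ ⊤) :
    pathExp S μ u (fun x => c * g x) = c * pathExp S μ u g :=
  lintegral_const_mul' _ _ hc

variable [MeasurableAdd₂ E]

lemma measurable_path (hS : Measurable S) :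
    Measurable fun p : E × (ℕ → E) => path S p.1 p.2 := by
  refine measurable_pi_lambda _ fun n => ?_
  induction n with
  | zero => exact measurable_fst
  | succ n ih => exact (hS.comp ih).add ((measurable_pi_apply n).comp measurable_snd)

lemma measurable_path_right (hS : Measurable S) (u : E) : Measurable (path S u) :=
  (measurable_path hS).comp measurable_prodMk_left

lemma pathExp_finsetSum {ι : Type*} (hS : Measurable S) (t : Finset ι) {c : ι → ℝ≥0∞}
    (hc : ∀ i, c i ≠ ⊤) {g : ι → (ℕ → E) → ℝ≥0∞} (hg : ∀ i, Measurable (g i)) :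
    pathExp S μ u (fun x => ∑ i ∈ t, c i * g i x) = ∑ i ∈ t, c i * pathExp S μ u (g i) :=
  (lintegral_finsetSum t fun i _ =>
    ((hg i).comp (measurable_path_right hS u)).const_mul (c i)).trans
    (Finset.sum_congr rfl fun i _ => pathExp_const_mul (hc i))

lemma measurable_step_path (hS : Measurable S) (u : E) :
    Measurable fun p : E × (ℕ → E) => path S (S u + p.1) p.2 :=
  (measurable_path hS).comp ((measurable_fst.const_add (S u)).prodMk measurable_snd)

/-- The Markov property at time one. -/
lemma pathExp_eq_lintegral_pathExp_prepend [IsProbabilityMeasure μ] (hS : Measurable S) (u : E)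
    (hg : Measurable g) :
    pathExp S μ u g = ∫⁻ h, pathExp S μ (S u + h) (fun x => g (prepend u x)) ∂μ := by
  have hmeas : Measurable fun p : E × (ℕ → E) => g (prepend u (path S (S u + p.1) p.2)) :=
    hg.comp ((measurable_prepend_left u).comp (measurable_step_path hS u))
  unfold pathExp
  rw [← lintegral_prod _ hmeas.aemeasurable]
  conv_lhs => rw [← prod_infinitePi_map_prepend μ]
  rw [lintegral_map (f := fun y => g (path S u y)) (hg.comp (measurable_path_right hS u))
    measurable_prepend]
  simp only [path_prepend]

end Path

/-! ### Chains preserving a set -/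

section InvariantChain

variable {E : Type*} [Add E] [MeasurableSpace E] {S : E → E} {μ : Measure E} {A : Set E} {u : E}
  {g g' : (ℕ → E) → ℝ≥0∞}

/-- The chain `u ↦ S u + h`, with `h` of law `μ`, almost surely stays in the set `A`. -/
structure IsInvariantChain (S : E → E) (μ : Measure E) (A : Set E) : Prop where
  measurable : Measurable S
  measurableSet : MeasurableSet A
  ae_mem : ∀ u ∈ A, ∀ᵐ h ∂μ, S u + h ∈ A

variable [MeasurableAdd₂ E] [IsProbabilityMeasure μ]

lemma IsInvariantChain.ae_path_mem (hA : IsInvariantChain S μ A) (hu : u ∈ A) :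
    ∀ᵐ y ∂Measure.infinitePi fun _ : ℕ => μ, ∀ n, path S u y n ∈ A := by
  rw [ae_all_iff]
  intro n
  induction n generalizing u with
  | zero => exact .of_forall fun _ => hu
  | succ n ih =>
    have hmeas : MeasurableSet {y : ℕ → E | path S u y (n + 1) ∈ A} :=
      ((measurable_pi_apply (n + 1)).comp (measurable_path_right hA.measurable u)) hA.measurableSet
    have hstep : MeasurableSet {p : E × (ℕ → E) | path S (S u + p.1) p.2 n ∈ A} :=
      ((measurable_pi_apply n).comp (measurable_step_path hA.measurable u)) hA.measurableSet
    rw [← prod_infinitePi_map_prepend μ, ae_map_iff measurable_prepend.aemeasurable hmeas]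
    simp only [path_prepend, prepend]
    rw [Measure.ae_prod_iff_ae_ae hstep]
    filter_upwards [hA.ae_mem u hu] with h hh using ih hh

lemma IsInvariantChain.pathExp_mono (hA : IsInvariantChain S μ A) (hu : u ∈ A)
    (h : ∀ x : ℕ → E, (∀ n, x n ∈ A) → g x ≤ g' x) : pathExp S μ u g ≤ pathExp S μ u g' :=
  lintegral_mono_ae ((hA.ae_path_mem hu).mono fun _ hy => h _ hy)

lemma IsInvariantChain.pathExp_le_of_forall_le (hA : IsInvariantChain S μ A) (hu : u ∈ A)
    {c : ℝ≥0∞} (h : ∀ x : ℕ → E, (∀ n, x n ∈ A) → g x ≤ c) : pathExp S μ u g ≤ c :=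
  (hA.pathExp_mono hu h).trans_eq (by simp [pathExp])

lemma IsInvariantChain.le_pathExp_of_forall_le (hA : IsInvariantChain S μ A) (hu : u ∈ A)
    {c : ℝ≥0∞} (h : ∀ x : ℕ → E, (∀ n, x n ∈ A) → c ≤ g x) : c ≤ pathExp S μ u g :=
  (by simp [pathExp] : c = pathExp S μ u fun _ => c).trans_le (hA.pathExp_mono hu h)

end InvariantChain

section Attain

variable {E : Type*} [AddCommGroup E] {S : E → E} {K : Set E}

lemma mem_attain_succ_singleton {v y : E} {n : ℕ} :
    y ∈ attain S K {v} (n + 1) ↔ ∃ h ∈ K, y ∈ attain S K {S v + h} n := by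
  induction n generalizing y with
  | zero => simp only [attain, Set.image_singleton, Set.mem_add, Set.mem_singleton_iff,
      exists_eq_left, eq_comm (a := y)]
  | succ n ih =>
    rw [attain, Set.mem_add]
    simp only [Set.exists_mem_image, ih]
    constructor
    · rintro ⟨z, ⟨h, hh, hz⟩, k, hk, rfl⟩
      exact ⟨h, hh, Set.add_mem_add (Set.mem_image_of_mem S hz) hk⟩
    · rintro ⟨h, hh, hy⟩
      obtain ⟨_, ⟨z, hz, rfl⟩, k, hk, rfl⟩ := Set.mem_add.1 hy
      exact ⟨z, ⟨h, hh, hz⟩, k, hk, rfl⟩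

end Attain

section Superadditivity

variable {E : Type*} [Add E] [MeasurableSpace E] [MeasurableAdd₂ E] {S : E → E}
  {μ : Measure E} [IsProbabilityMeasure μ] {A : Set E} {u : E}

/-- The Markov property at time `n`, for a functional `g` whose dependence on the path after
time `n` costs at most the factor `a`. -/
lemma IsInvariantChain.mul_pathExp_mul_le (hA : IsInvariantChain S μ A)
    {a c : ℝ≥0∞} {f : (ℕ → E) → ℝ≥0∞} (hf : Measurable f) (hfc : ∀ v ∈ A, c ≤ pathExp S μ v f)
    (n : ℕ) {g g' : (ℕ → E) → ℝ≥0∞} (hg : Measurable g) (hg' : Measurable g')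
    (hgg' : ∀ x x' : ℕ → E, (∀ j, x j ∈ A) → (∀ j, x' j ∈ A) → (∀ j < n, x j = x' j) →
      a * g' x' ≤ g x)
    (hu : u ∈ A) :
    a * pathExp S μ u g' * c ≤ pathExp S μ u fun x => g x * f (seqShift^[n] x) := by
  induction n generalizing g g' u with
  | zero =>
    have hconst : ∀ x : ℕ → E, (∀ j, x j ∈ A) → a * pathExp S μ u g' ≤ g x := fun x hx =>
      (lintegral_const_mul_le _ _).trans
        (hA.pathExp_le_of_forall_le (g := fun x' => a * g' x') hu fun x' hx' =>
          hgg' x x' hx hx' (by simp))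
    calc a * pathExp S μ u g' * c
        ≤ a * pathExp S μ u g' * pathExp S μ u f := by gcongr; exact hfc u hu
      _ ≤ pathExp S μ u fun x => a * pathExp S μ u g' * f x := lintegral_const_mul_le _ _
      _ ≤ pathExp S μ u fun x => g x * f x :=
        hA.pathExp_mono hu fun x hx => by gcongr; exact hconst x hx
  | succ n ih =>
    have hmeas : Measurable fun x => g x * f (seqShift^[n + 1] x) :=
      hg.mul (hf.comp (measurable_seqShift.iterate _))
    rw [pathExp_eq_lintegral_pathExp_prepend hA.measurable u hmeas,
      pathExp_eq_lintegral_pathExp_prepend hA.measurable u hg', mul_right_comm]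
    refine (lintegral_const_mul_le _ _).trans (lintegral_mono_ae ?_)
    filter_upwards [hA.ae_mem u hu] with h hh
    rw [mul_right_comm]
    refine ih (hg.comp (measurable_prepend_left u)) (hg'.comp (measurable_prepend_left u))
      (fun x x' hx hx' hxx' => hgg' _ _ (prepend_mem hu hx) (prepend_mem hu hx') ?_) hh
    rintro (_ | j) hj
    · rfl
    · exact hxx' j (Nat.lt_of_succ_lt_succ hj)

end Superadditivity

/-! ### Dependence on the starting point -/

section Stability

variable {E : Type*} [MeasurableSpace E]

/-- The total variation distance between `μ` and its translate by `-Δ` is at most `c`, stated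
through integrals of bounded functions, which need not be measurable. -/
def TranslationBound [Sub E] (μ : Measure E) (Δ : E) (c : ℝ) : Prop :=
  ∀ (M : ℝ≥0∞) (φ : E → ℝ≥0∞), (∀ h, φ h ≤ M) →
    ∫⁻ h, φ h ∂μ ≤ ∫⁻ h, φ (h - Δ) ∂μ + ENNReal.ofReal c * M

/-- The path functional `G` changes at most by the factor `exp w` when a point of `A` is prepended
to a path in `A`. -/
structure PrependStable (A : Set E) (w : ℝ) (G : (ℕ → E) → ℝ≥0∞) : Prop where
  measurable : Measurable G
  prepend_le : ∀ v ∈ A, ∀ x : ℕ → E, (∀ n, x n ∈ A) → G (prepend v x) ≤ expENN w * G x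
  le_prepend : ∀ v ∈ A, ∀ x : ℕ → E, (∀ n, x n ∈ A) → G x ≤ expENN w * G (prepend v x)

lemma TranslationBound.mono [Sub E] {μ : Measure E} {Δ : E} {c c' : ℝ}
    (h : TranslationBound μ Δ c) (hc : c ≤ c') :
    TranslationBound μ Δ c' := fun M φ hφ =>
  (h M φ hφ).trans (by gcongr)

end Stability

section Coupling

variable {E : Type*} [NormedAddCommGroup E] [MeasurableSpace E] {S : E → E} {μ : Measure E}
  {A : Set E} {u u' Δ : E} {c w : ℝ}

/-- A chain on a compact set `A` in which (i) two starting points `u`, `u'` can be brought together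
at any prescribed rate `q` by translating the noise, at a total variation cost proportional to
`‖u - u'‖`, and (ii) every point of `A` can be approached from every other one. -/
structure IsMixingChain (S : E → E) (μ : Measure E) (A : Set E) : Prop where
  continuous : Continuous S
  isCompact : IsCompact A
  nonempty : A.Nonempty
  ae_mem : ∀ u ∈ A, ∀ᵐ h ∂μ, S u + h ∈ A
  coupling : ∀ q : ℝ, 0 < q → ∃ C : ℝ, 0 ≤ C ∧ ∀ u ∈ A, ∀ u' ∈ A, ∃ Δ : E,
    ‖S u - Δ - S u'‖ ≤ q * ‖u - u'‖ ∧ TranslationBound μ Δ (C * ‖u - u'‖)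
  irreducible : ∀ v ∈ A, A ⊆ attainDom S (msupp μ) {v}

lemma IsMixingChain.isInvariantChain [BorelSpace E] (hC : IsMixingChain S μ A) :
    IsInvariantChain S μ A where
  measurable := hC.continuous.measurable
  measurableSet := hC.isCompact.measurableSet
  ae_mem := hC.ae_mem

variable [SecondCountableTopology E] [BorelSpace E] [IsProbabilityMeasure μ]

lemma IsInvariantChain.pathExp_le_of_translationBound (hA : IsInvariantChain S μ A) (hu : u ∈ A)
    (hu' : u' ∈ A) (hΔ : TranslationBound μ Δ c) {g : (ℕ → E) → ℝ≥0∞} (hg : Measurable g)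
    {M : ℝ≥0∞} (hM : ∀ v ∈ A, pathExp S μ v (fun x => g (prepend u x)) ≤ M) {F : E → ℝ≥0∞}
    (hF : ∀ h, S u + (h - Δ) ∈ A → S u' + h ∈ A →
      pathExp S μ (S u + (h - Δ)) (fun x => g (prepend u x)) ≤ F h) :
    pathExp S μ u g ≤ ∫⁻ h, F h ∂μ + ENNReal.ofReal c * M := by
  classical
  let φ : E → ℝ≥0∞ := fun h =>
    if S u + h ∈ A then pathExp S μ (S u + h) (fun x => g (prepend u x)) else 0
  have hφM (h : E) : φ h ≤ M := by
    by_cases hh : S u + h ∈ A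
    · simpa only [φ, if_pos hh] using hM _ hh
    · simp [φ, hh]
  have hφ : pathExp S μ u g = ∫⁻ h, φ h ∂μ := by
    rw [pathExp_eq_lintegral_pathExp_prepend hA.measurable u hg]
    refine lintegral_congr_ae ?_
    filter_upwards [hA.ae_mem u hu] with h hh
    simp only [φ, if_pos hh]
  have hφF : ∀ᵐ h ∂μ, φ (h - Δ) ≤ F h := by
    filter_upwards [hA.ae_mem u' hu'] with h hh
    by_cases hh' : S u + (h - Δ) ∈ A
    · simpa only [φ, if_pos hh'] using hF h hh' hh
    · simp [φ, hh']
  rw [hφ]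
  exact (hΔ M φ hφM).trans (by gcongr ?_ + _; exact lintegral_mono_ae hφF)

/-- Iterating the one-step coupling, the distance of the two paths decays like `q ^ j * δ`, and
the total variation costs of the successive steps form a geometric series. -/
lemma IsInvariantChain.pathExp_le_of_coupling (hA : IsInvariantChain S μ A) {q C : ℝ}
    (hq : 0 < q)
    (hcoupling : ∀ u ∈ A, ∀ u' ∈ A, ∃ Δ : E,
      ‖S u - Δ - S u'‖ ≤ q * ‖u - u'‖ ∧ TranslationBound μ Δ (C * ‖u - u'‖))
    (hC : 0 ≤ C) (hqw : 2 * ENNReal.ofReal q * expENN w ≤ 1)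
    {G : (ℕ → E) → ℝ≥0∞} (hG : PrependStable A w G)
    {M : ℝ≥0∞} (hM : ∀ v ∈ A, pathExp S μ v G ≤ M) {a : ℝ≥0∞} (ha : a ≠ ⊤) {n : ℕ} {δ : ℝ}
    (hδ : 0 ≤ δ) {D : ℝ≥0∞} (hD : D ≠ ⊤) {g g' : (ℕ → E) → ℝ≥0∞} (hg : Measurable g)
    (hg' : Measurable g') (hgG : ∀ x : ℕ → E, (∀ j, x j ∈ A) → g x ≤ D * G x)
    (hgg' : ∀ x x' : ℕ → E, (∀ j, x j ∈ A) → (∀ j, x' j ∈ A) →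
      (∀ j ≤ n, ‖x j - x' j‖ ≤ q ^ j * δ) → g x ≤ a * g' x')
    (hu : u ∈ A) (hu' : u' ∈ A) (huu' : ‖u - u'‖ ≤ δ) :
    pathExp S μ u g ≤
      a * pathExp S μ u' g' + 2 * (ENNReal.ofReal (C * δ) * (D * expENN w * M)) := by
  induction n generalizing δ D g g' u u' with
  | zero =>
    refine le_add_right ((lintegral_mono_ae ?_).trans_eq (lintegral_const_mul' _ _ ha))
    filter_upwards [hA.ae_path_mem hu, hA.ae_path_mem hu'] with y hy hy'
    refine hgg' _ _ hy hy' fun j hj => ?_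
    rw [Nat.le_zero.1 hj, pow_zero, one_mul]
    exact huu'
  | succ n ih =>
    obtain ⟨Δ, hΔ, htv⟩ := hcoupling u hu u' hu'
    have hDw : D * expENN w ≠ ⊤ := ENNReal.mul_ne_top hD (expENN_ne_top w)
    have hguG : ∀ x : ℕ → E, (∀ j, x j ∈ A) → g (prepend u x) ≤ D * expENN w * G x :=
      fun x hx => (hgG _ (prepend_mem hu hx)).trans
        ((mul_le_mul_right (hG.prepend_le u hu x hx) D).trans_eq (mul_assoc _ _ _).symm)
    have hguM : ∀ v ∈ A, pathExp S μ v (fun x => g (prepend u x)) ≤ D * expENN w * M :=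
      fun v hv => (hA.pathExp_mono hv hguG).trans
        ((pathExp_const_mul hDw).trans_le (mul_le_mul_right (hM v hv) _))
    have hstep := hA.pathExp_le_of_translationBound hu hu'
      (htv.mono (mul_le_mul_of_nonneg_left huu' hC)) hg hguM fun h hh hh' =>
        ih (g' := fun x => g' (prepend u' x)) (mul_nonneg hq.le hδ) hDw
          (hg.comp (measurable_prepend_left u)) (hg'.comp (measurable_prepend_left u')) hguG
          (fun x x' hx hx' hxx' => hgg' _ _ (prepend_mem hu hx) (prepend_mem hu' hx') (by
            rintro (_ | j) hj
            · simpa only [prepend, pow_zero, one_mul] using huu'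
            · simpa only [prepend, pow_succ, mul_assoc] using hxx' j (Nat.le_of_succ_le_succ hj)))
          hh hh' (by
            rw [show S u + (h - Δ) - (S u' + h) = S u - Δ - S u' by abel]
            exact hΔ.trans (mul_le_mul_of_nonneg_left huu' hq.le))
    rw [lintegral_add_right _ measurable_const, lintegral_const_mul' _ _ ha,
      ← pathExp_eq_lintegral_pathExp_prepend hA.measurable u' hg', lintegral_const, measure_univ,
      mul_one, mul_left_comm C, ENNReal.ofReal_mul hq.le] at hstep
    set T := ENNReal.ofReal (C * δ) * (D * expENN w * M)
    calc pathExp S μ u g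
        ≤ a * pathExp S μ u' g' + 2 * (ENNReal.ofReal q * ENNReal.ofReal (C * δ) *
            (D * expENN w * expENN w * M)) + T := hstep
      _ = a * pathExp S μ u' g' + (2 * ENNReal.ofReal q * expENN w * T + T) := by
          simp only [T]; ring
      _ ≤ a * pathExp S μ u' g' + (1 * T + T) := by gcongr
      _ = a * pathExp S μ u' g' + 2 * T := by ring

lemma IsMixingChain.exists_pathExp_le_add_half (hC : IsMixingChain S μ A) (hw : 0 ≤ w) :
    ∃ δ > 0, ∀ {G : (ℕ → E) → ℝ≥0∞} (_ : PrependStable A w G) {M a : ℝ≥0∞} (_ : a ≠ ⊤) {n : ℕ},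
      (∀ v ∈ A, pathExp S μ v G ≤ M) →
      (∀ x x' : ℕ → E, (∀ j, x j ∈ A) → (∀ j, x' j ∈ A) →
        (∀ j ≤ n, ‖x j - x' j‖ ≤ (1 / 2) ^ j * δ) → G x ≤ a * G x') →
      ∀ u ∈ A, ∀ u' ∈ A, ‖u - u'‖ ≤ δ → pathExp S μ u G ≤ a * pathExp S μ u' G + 2⁻¹ * M := by
  set q : ℝ := Real.exp (-w) / 2 with hq_def
  have hq : 0 < q := by positivity
  have hq_le : q ≤ 1 / 2 := by
    rw [hq_def]; gcongr; exact Real.exp_le_one_iff.2 (by linarith)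
  have hexp : Real.exp (-w) * Real.exp w = 1 := by
    rw [← Real.exp_add, neg_add_cancel, Real.exp_zero]
  obtain ⟨C, hC0, hcoupling⟩ := hC.coupling q hq
  have hqw : 2 * ENNReal.ofReal q * expENN w ≤ 1 := by
    rw [expENN, show (2 : ℝ≥0∞) = ENNReal.ofReal 2 by simp, ← ENNReal.ofReal_mul zero_le_two,
      ← ENNReal.ofReal_mul (by positivity), ENNReal.ofReal_le_one, mul_div_cancel₀ _ two_ne_zero,
      hexp]
  -- chosen so that `2 * (C * δ) * exp w ≤ 1 / 2`
  refine ⟨Real.exp (-w) / (4 * (C + 1)), by positivity, ?_⟩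
  intro G hG M a ha n hM hGG u hu u' hu' huu'
  refine (hC.isInvariantChain.pathExp_le_of_coupling hq hcoupling hC0 hqw hG hM ha (by positivity)
    ENNReal.one_ne_top hG.measurable hG.measurable (fun x _ => (one_mul _).ge)
    (fun x x' hx hx' hxx' => hGG x x' hx hx' fun j hj => (hxx' j hj).trans (by gcongr))
    hu hu' huu').trans ?_
  rw [one_mul, ← mul_assoc, ← mul_assoc]
  gcongr
  rw [expENN, show (2 : ℝ≥0∞) = ENNReal.ofReal 2 by simp, ← ENNReal.ofReal_inv_of_pos two_pos,
    ← ENNReal.ofReal_mul zero_le_two, ← ENNReal.ofReal_mul (by positivity)]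
  refine ENNReal.ofReal_le_ofReal ?_
  calc 2 * (C * (Real.exp (-w) / (4 * (C + 1)))) * Real.exp w
      = 2⁻¹ * (C / (C + 1)) * (Real.exp (-w) * Real.exp w) := by field_simp; ring
    _ ≤ 2⁻¹ := by
        have : C / (C + 1) ≤ 1 := (div_le_one (by positivity)).2 (by linarith)
        rw [hexp]; linarith

/-- Positivity of the noise on neighbourhoods of the points of its support makes a point attainable
in `n` steps visible in the expectations, with a constant independent of the functional. -/
lemma IsInvariantChain.exists_mul_le_pathExp_of_mem_attain (hA : IsInvariantChain S μ A)
    (hS : Continuous S) (w : ℝ) {n : ℕ} {v y : E} (hy : y ∈ attain S (msupp μ) {v} n)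
    {O : Set E} (hO : IsOpen O) (hyO : y ∈ O) :
    ∃ U ∈ 𝓝 v, ∃ p : ℝ≥0∞, 0 < p ∧ ∀ {G : (ℕ → E) → ℝ≥0∞}, PrependStable A w G →
      ∀ c : ℝ≥0∞, (∀ u ∈ A, u ∈ O → c ≤ pathExp S μ u G) →
        ∀ u ∈ A, u ∈ U → p * c ≤ pathExp S μ u G := by
  induction n generalizing v with
  | zero =>
    obtain rfl : y = v := hy
    exact ⟨O, hO.mem_nhds hyO, 1, one_pos,
      fun _ c hc u hu huO => (one_mul c).trans_le (hc u hu huO)⟩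
  | succ n ih =>
    obtain ⟨h, hh, hy⟩ := mem_attain_succ_singleton.1 hy
    obtain ⟨U, hU, p, hp, hpU⟩ := ih hy
    have hstep : Tendsto (fun z : E × E => S z.1 + z.2) (𝓝 v ×ˢ 𝓝 h) (𝓝 (S v + h)) := by
      rw [← nhds_prod_eq]
      exact ((hS.comp continuous_fst).add continuous_snd).tendsto (v, h)
    obtain ⟨U', hU', N, hN, hUN⟩ := Filter.mem_prod_iff.1 (hstep hU)
    refine ⟨U', hU', expENN (-w) * (p * μ (interior N)), ENNReal.mul_pos (expENN_pos _).ne'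
      (mul_ne_zero hp.ne' (hh _ (interior_mem_nhds.2 hN)).ne'), fun {G} hG c hc u hu huU => ?_⟩
    rw [mul_assoc, expENN_neg_mul_le_iff,
      pathExp_eq_lintegral_pathExp_prepend hA.measurable u hG.measurable,
      ← lintegral_const_mul' _ _ (expENN_ne_top w)]
    calc p * μ (interior N) * c = ∫⁻ _ in interior N, p * c ∂μ := by
          rw [setLIntegral_const]; ring
      _ ≤ ∫⁻ k in interior N, pathExp S μ (S u + k) G ∂μ := by
          refine lintegral_mono_ae ?_
          filter_upwards [ae_restrict_of_ae (hA.ae_mem u hu),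
            ae_restrict_mem isOpen_interior.measurableSet] with k hk hkN
          exact hpU hG c hc _ hk (hUN (Set.mk_mem_prod huU (interior_subset hkN)))
      _ ≤ ∫⁻ k, pathExp S μ (S u + k) G ∂μ := setLIntegral_le_lintegral _ _
      _ ≤ ∫⁻ k, expENN w * pathExp S μ (S u + k) (fun x => G (prepend u x)) ∂μ := by
          refine lintegral_mono_ae ?_
          filter_upwards [hA.ae_mem u hu] with k hk
          exact (hA.pathExp_mono hk (hG.le_prepend u hu)).trans_eq
            (pathExp_const_mul (expENN_ne_top w))

lemma IsMixingChain.exists_mul_le_pathExp (hC : IsMixingChain S μ A) (w : ℝ) {δ : ℝ}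
    (hδ : 0 < δ) :
    ∃ p : ℝ≥0∞, 0 < p ∧ ∀ {G : (ℕ → E) → ℝ≥0∞}, PrependStable A w G → ∀ c : ℝ≥0∞, ∀ u ∈ A,
      (∀ u' ∈ A, ‖u - u'‖ ≤ δ → c ≤ pathExp S μ u' G) → ∀ v ∈ A, p * c ≤ pathExp S μ v G := by
  suffices h : ∃ p : ℝ≥0∞, 0 < p ∧ ∀ {G : (ℕ → E) → ℝ≥0∞}, PrependStable A w G → ∀ c : ℝ≥0∞,
      ∀ z ∈ A ×ˢ A, z.1 ∈ A → z.2 ∈ A → (∀ u' ∈ A, ‖z.1 - u'‖ ≤ δ → c ≤ pathExp S μ u' G) →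
        p * c ≤ pathExp S μ z.2 G by
    obtain ⟨p, hp, h⟩ := h
    exact ⟨p, hp, fun hG c u hu hc v hv => h hG c (u, v) ⟨hu, hv⟩ hu hv hc⟩
  refine (hC.isCompact.prod hC.isCompact).induction_on ⟨1, one_pos, by simp⟩ ?mono ?union ?nhds
  case mono =>
    rintro s t hst ⟨p, hp, h⟩
    exact ⟨p, hp, fun hG c z hz => h hG c z (hst hz)⟩
  case union =>
    rintro s t ⟨p, hp, h⟩ ⟨p', hp', h'⟩
    refine ⟨min p p', lt_min hp hp', fun hG c z hz h₁ h₂ h₃ => ?_⟩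
    rcases hz with hz | hz
    · exact (mul_le_mul_left (min_le_left p p') c).trans (h hG c z hz h₁ h₂ h₃)
    · exact (mul_le_mul_left (min_le_right p p') c).trans (h' hG c z hz h₁ h₂ h₃)
  case nhds =>
    rintro ⟨u, v⟩ ⟨hu, hv⟩
    obtain ⟨y, hy, huy⟩ := Metric.mem_closure_iff.1 (hC.irreducible v hv hu) (δ / 2) (half_pos hδ)
    obtain ⟨n, hn⟩ := Set.mem_iUnion.1 hy
    obtain ⟨U, hU, p, hp, h⟩ := hC.isInvariantChain.exists_mul_le_pathExp_of_mem_attain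
      hC.continuous w hn Metric.isOpen_ball (Metric.mem_ball'.2 huy)
    refine ⟨Metric.ball u (δ / 2) ×ˢ U, mem_nhdsWithin_of_mem_nhds
      (prod_mem_nhds (Metric.ball_mem_nhds _ (half_pos hδ)) hU), p, hp, ?_⟩
    rintro G hG c ⟨u₁, v₁⟩ ⟨hu₁, hv₁⟩ - hv₁A hc
    refine h hG c (fun u₂ hu₂A hu₂ => hc u₂ hu₂A ?_) v₁ hv₁A hv₁
    rw [← dist_eq_norm]
    linarith [dist_triangle_right u₁ u₂ u, Metric.mem_ball.1 hu₁, Metric.mem_ball.1 hu₂]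

lemma exists_mem_mul_biSup_le {X : Type*} {A : Set X} (hA : A.Nonempty) {f : X → ℝ≥0∞}
    (hf : ⨆ v ∈ A, f v ≠ ⊤) {r : ℝ≥0∞} (hr : r < 1) : ∃ u ∈ A, r * ⨆ v ∈ A, f v ≤ f u := by
  rcases eq_or_ne (⨆ v ∈ A, f v) 0 with h0 | h0
  · obtain ⟨u, hu⟩ := hA
    exact ⟨u, hu, by simp [h0]⟩
  · have hlt : r * ⨆ v ∈ A, f v < ⨆ v ∈ A, f v :=
      (ENNReal.mul_lt_mul_left h0 hf hr).trans_eq (one_mul _)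
    obtain ⟨u, hu, hlt⟩ := lt_biSup_iff.1 hlt
    exact ⟨u, hu, hlt.le⟩

/-- Let `u₀` nearly maximize the expectation. The coupling carries a quarter of the maximum over to
a neighbourhood of `u₀`, which the chain visits from everywhere by irreducibility. -/
theorem IsMixingChain.exists_harnack (hC : IsMixingChain S μ A) (hw : 0 ≤ w) :
    ∃ δ > 0, ∃ c : ℝ, ∀ {G : (ℕ → E) → ℝ≥0∞} (_ : PrependStable A w G) {B : ℝ≥0∞} (_ : B ≠ ⊤)
      (_ : ∀ x : ℕ → E, (∀ j, x j ∈ A) → G x ≤ B) {F : ℝ} {n : ℕ},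
      (∀ x x' : ℕ → E, (∀ j, x j ∈ A) → (∀ j, x' j ∈ A) →
        (∀ j ≤ n, ‖x j - x' j‖ ≤ (1 / 2) ^ j * δ) → G x ≤ expENN F * G x') →
      ∀ u ∈ A, ∀ u' ∈ A, pathExp S μ u G ≤ expENN (F + c) * pathExp S μ u' G := by
  obtain ⟨δ, hδ, hnear⟩ := hC.exists_pathExp_le_add_half hw
  obtain ⟨p, hp, hirr⟩ := hC.exists_mul_le_pathExp w hδ
  obtain ⟨c, hc⟩ := exists_expENN_neg_le (ENNReal.mul_pos hp.ne' (by simp : (4⁻¹ : ℝ≥0∞) ≠ 0))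
  refine ⟨δ, hδ, c, fun {G} hG {B} hB hGB {F n} hGG u hu u' hu' => ?_⟩
  set M : ℝ≥0∞ := ⨆ v ∈ A, pathExp S μ v G
  have hM : ∀ v ∈ A, pathExp S μ v G ≤ M := fun v hv => le_iSup₂_of_le v hv le_rfl
  have hM_top : M ≠ ⊤ := ne_top_of_le_ne_top hB
    (iSup₂_le fun v hv => hC.isInvariantChain.pathExp_le_of_forall_le hv hGB)
  obtain ⟨u₀, hu₀, hmax⟩ := exists_mem_mul_biSup_le hC.nonempty hM_top
    (show (4⁻¹ + 2⁻¹ : ℝ≥0∞) < 1 by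
      rw [← ENNReal.inv_two_add_inv_two]
      exact ENNReal.add_lt_add_right (by simp) (by simp; norm_num))
  have hquarter : ∀ v ∈ A, ‖u₀ - v‖ ≤ δ → expENN (-F) * (4⁻¹ * M) ≤ pathExp S μ v G := by
    intro v hv hδv
    have h := hmax.trans (hnear hG (expENN_ne_top F) hM hGG u₀ hu₀ v hv hδv)
    rw [add_mul] at h
    exact expENN_neg_mul_le_iff.2
      (ENNReal.le_of_add_le_add_right (ENNReal.mul_ne_top (by simp) hM_top) h)
  refine (hM u hu).trans (expENN_neg_mul_le_iff.1 ?_)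
  calc expENN (-(F + c)) * M = expENN (-F) * (expENN (-c) * M) := by
        rw [neg_add, expENN_add, mul_assoc]
    _ ≤ expENN (-F) * (p * 4⁻¹ * M) := by gcongr
    _ = p * (expENN (-F) * (4⁻¹ * M)) := by ring
    _ ≤ pathExp S μ u' G := hirr hG _ u₀ hu₀ hquarter u' hu'

end Coupling

/-! ### Exponentials of Birkhoff sums -/

section BirkhoffSum

variable {α F : Type*} [TopologicalSpace α] [NormedAddCommGroup F] {f : α → α} (W : α →ᵇ F)

lemma continuous_birkhoffSum (hf : Continuous f) (k : ℕ) : Continuous (birkhoffSum f W k) :=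
  continuous_finsetSum _ fun n _ => W.continuous.comp (hf.iterate n)

lemma norm_birkhoffSum_le (f : α → α) (k : ℕ) (x : α) : ‖birkhoffSum f W k x‖ ≤ k * ‖W‖ :=
  (norm_sum_le_of_le _ fun n _ => W.norm_coe_le_norm (f^[n] x)).trans (by simp)

lemma norm_birkhoffSum_apply_sub_le (f : α → α) (k : ℕ) (x : α) :
    ‖birkhoffSum f W k (f x) - birkhoffSum f W k x‖ ≤ 2 * ‖W‖ := by
  rw [birkhoffSum_apply_sub_birkhoffSum, ← dist_eq_norm]
  exact W.dist_le_two_norm _ _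

lemma norm_birkhoffSum_iterate_sub_le (f : α → α) (k r : ℕ) (x : α) :
    ‖birkhoffSum f W k (f^[r] x) - birkhoffSum f W k x‖ ≤ r * (2 * ‖W‖) := by
  induction r generalizing x with
  | zero => simp
  | succ r ih =>
    rw [Function.iterate_succ_apply, Nat.cast_succ, add_mul, one_mul]
    exact (norm_sub_le_norm_sub_add_norm_sub _ _ _).trans
      (add_le_add (ih (f x)) (norm_birkhoffSum_apply_sub_le W f k x))

end BirkhoffSum

section Modulus

variable {E F : Type*} [NormedAddCommGroup E] [NormedAddCommGroup F] {A : Set E}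

lemma exists_pos_le_sum_norm_sub {T : Set ((ℕ → E) × (ℕ → E))} (hT : IsCompact T)
    (hne : ∀ p ∈ T, p.1 ≠ p.2) :
    ∃ r : ℕ, ∃ δ > 0, ∀ p ∈ T, δ ≤ ∑ j ∈ Finset.range r, ‖p.1 j - p.2 j‖ := by
  let d : ℕ → (ℕ → E) × (ℕ → E) → ℝ := fun r p => ∑ j ∈ Finset.range r, ‖p.1 j - p.2 j‖
  have hd (r : ℕ) : Continuous (d r) := by fun_prop
  have hd_mono : Monotone d := fun r s hrs p =>
    Finset.sum_le_sum_of_subset_of_nonneg (Finset.range_subset_range.2 hrs)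
      fun _ _ _ => norm_nonneg _
  obtain ⟨r, hr⟩ : ∃ r, T ⊆ {p | 0 < d r p} := by
    refine hT.elim_directed_cover _ (fun r => isOpen_lt continuous_const (hd r)) ?_
      (Monotone.directed_le fun r s hrs p hp => lt_of_lt_of_le hp (hd_mono hrs p))
    intro p hp
    obtain ⟨j, hj⟩ := Function.ne_iff.1 (hne p hp)
    exact Set.mem_iUnion.2 ⟨j + 1, Finset.sum_pos' (fun _ _ => norm_nonneg _)
      ⟨j, Finset.self_mem_range_succ j, norm_pos_iff.2 (sub_ne_zero.2 hj)⟩⟩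
  rcases T.eq_empty_or_nonempty with rfl | hT'
  · exact ⟨r, 1, one_pos, by simp⟩
  · obtain ⟨p, hp, hmin⟩ := hT.exists_isMinOn hT' (hd r).continuousOn
    exact ⟨r, d r p, hr hp, fun _ hq => hmin hq⟩

lemma exists_norm_sub_le_add_mul_sum (hA : IsCompact A) (V : (ℕ → E) →ᵇ F) {ε : ℝ} (hε : 0 < ε) :
    ∃ L ≥ 0, ∃ r : ℕ, ∀ x x' : ℕ → E, (∀ n, x n ∈ A) → (∀ n, x' n ∈ A) →
      ‖V x - V x'‖ ≤ ε + L * ∑ j ∈ Finset.range r, ‖x j - x' j‖ := by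
  let T : Set ((ℕ → E) × (ℕ → E)) :=
    ((Set.univ.pi fun _ => A) ×ˢ (Set.univ.pi fun _ => A)) ∩ {p | ε ≤ ‖V p.1 - V p.2‖}
  have hT : IsCompact T :=
    ((isCompact_univ_pi fun _ => hA).prod (isCompact_univ_pi fun _ => hA)).inter_right
      (isClosed_le continuous_const (by fun_prop))
  have hne : ∀ p ∈ T, p.1 ≠ p.2 := by
    rintro p ⟨-, hp⟩ h
    rw [Set.mem_ofPred_eq, h, sub_self, norm_zero] at hp
    exact hp.not_gt hε
  obtain ⟨r, δ, hδ, hδT⟩ := exists_pos_le_sum_norm_sub hT hne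
  refine ⟨2 * ‖V‖ / δ, by positivity, r, fun x x' hx hx' => ?_⟩
  by_cases hle : ε ≤ ‖V x - V x'‖
  · have hfar := hδT (x, x') ⟨⟨fun n _ => hx n, fun n _ => hx' n⟩, hle⟩
    calc ‖V x - V x'‖ ≤ 2 * ‖V‖ := by rw [← dist_eq_norm]; exact V.dist_le_two_norm x x'
      _ = 2 * ‖V‖ / δ * δ := by field_simp
      _ ≤ 2 * ‖V‖ / δ * ∑ j ∈ Finset.range r, ‖x j - x' j‖ := by gcongr
      _ ≤ _ := le_add_of_nonneg_left hε.le
  · exact (not_le.1 hle).le.trans (le_add_of_nonneg_right (by positivity))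

lemma sum_range_sum_range_add_le {a : ℕ → ℝ} (ha : ∀ n, 0 ≤ a n) (k r : ℕ) :
    ∑ n ∈ Finset.range k, ∑ j ∈ Finset.range r, a (n + j) ≤
      r * ∑ n ∈ Finset.range (k + r), a n := by
  have hwindow : ∀ j ∈ Finset.range r,
      ∑ n ∈ Finset.range k, a (n + j) ≤ ∑ n ∈ Finset.range (k + r), a n := fun j hj => by
    have hj := Finset.mem_range.1 hj
    rw [Finset.range_eq_Ico, Finset.sum_Ico_add']
    exact Finset.sum_le_sum_of_subset_of_nonneg (by intro n; simp; omega) fun n _ _ => ha n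
  rw [Finset.sum_comm]
  exact (Finset.sum_le_sum hwindow).trans (by simp)

lemma exists_norm_birkhoffSum_sub_le (hA : IsCompact A) (W : (ℕ → E) →ᵇ F) {ε : ℝ} (hε : 0 < ε) :
    ∃ L ≥ 0, ∃ r : ℕ, ∀ (k : ℕ) (x x' : ℕ → E), (∀ n, x n ∈ A) → (∀ n, x' n ∈ A) →
      ‖birkhoffSum seqShift W k x - birkhoffSum seqShift W k x'‖ ≤
        ε * k + L * ∑ j ∈ Finset.range (k + r), ‖x j - x' j‖ := by
  obtain ⟨L, hL, r, hLr⟩ := exists_norm_sub_le_add_mul_sum hA W hε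
  refine ⟨L * r, by positivity, r, fun k x x' hx hx' => ?_⟩
  have hterm (n : ℕ) : ‖W (seqShift^[n] x) - W (seqShift^[n] x')‖ ≤
      ε + L * ∑ j ∈ Finset.range r, ‖x (n + j) - x' (n + j)‖ := by
    simp only [seqShift_iterate]
    exact hLr _ _ (fun j => hx (n + j)) fun j => hx' (n + j)
  calc ‖birkhoffSum seqShift W k x - birkhoffSum seqShift W k x'‖
      ≤ ∑ n ∈ Finset.range k, (ε + L * ∑ j ∈ Finset.range r, ‖x (n + j) - x' (n + j)‖) := by
        rw [birkhoffSum, birkhoffSum, ← Finset.sum_sub_distrib]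
        exact norm_sum_le_of_le _ fun n _ => hterm n
    _ = ε * k + L * ∑ n ∈ Finset.range k, ∑ j ∈ Finset.range r, ‖x (n + j) - x' (n + j)‖ := by
        rw [Finset.sum_add_distrib, ← Finset.mul_sum, Finset.sum_const, Finset.card_range,
          nsmul_eq_mul, mul_comm]
    _ ≤ ε * k + L * (r * ∑ j ∈ Finset.range (k + r), ‖x j - x' j‖) := by
        gcongr
        exact sum_range_sum_range_add_le (fun n => norm_nonneg (x n - x' n)) k r
    _ = _ := by ring

end Modulus

section BirkhoffExp

variable {E F : Type*} [NormedAddCommGroup F] {φ : F → ℝ}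

/-- A superadditive `1`-Lipschitz function vanishing at `0`. Exponential growth rates exist for all
of them, but only the identity of `ℝ` (for the pressure) and `-‖·‖` on `ℝⁿ` (for the probabilities
of basic weak neighbourhoods) are eventually of interest. -/
structure IsSuperadditiveContraction (φ : F → ℝ) : Prop where
  map_zero : φ 0 = 0
  add_le_map_add : ∀ a b, φ a + φ b ≤ φ (a + b)
  le_add_norm_sub : ∀ a b, φ a ≤ φ b + ‖a - b‖

lemma IsSuperadditiveContraction.id : IsSuperadditiveContraction (fun a : ℝ => a) where
  map_zero := rfl
  add_le_map_add _ _ := le_rfl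
  le_add_norm_sub _ _ := sub_le_iff_le_add'.1 (Real.le_norm_self _)

lemma IsSuperadditiveContraction.neg_norm : IsSuperadditiveContraction fun a : F => -‖a‖ where
  map_zero := by simp
  add_le_map_add a b := by linarith [norm_add_le a b]
  le_add_norm_sub a b := by linarith [norm_le_norm_add_norm_sub a b]

lemma IsSuperadditiveContraction.le_norm (hφ : IsSuperadditiveContraction φ) (a : F) :
    φ a ≤ ‖a‖ := by
  simpa [hφ.map_zero] using hφ.le_add_norm_sub a 0

lemma IsSuperadditiveContraction.neg_norm_le (hφ : IsSuperadditiveContraction φ) (a : F) :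
    -‖a‖ ≤ φ a := by
  simpa [hφ.map_zero, neg_le_iff_add_nonneg] using hφ.le_add_norm_sub 0 a

lemma IsSuperadditiveContraction.continuous (hφ : IsSuperadditiveContraction φ) : Continuous φ :=
  (LipschitzWith.of_le_add fun a b => (dist_eq_norm a b).symm ▸ hφ.le_add_norm_sub a b).continuous

lemma IsSuperadditiveContraction.expENN_le (hφ : IsSuperadditiveContraction φ) {a b : F} {t : ℝ}
    (h : ‖a - b‖ ≤ t) : expENN (φ a) ≤ expENN t * expENN (φ b) := by
  rw [← expENN_add, expENN_le_expENN, add_comm]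
  exact (hφ.le_add_norm_sub a b).trans (by gcongr)

variable [TopologicalSpace E]

/-- The weight `exp (φ (∑ n < k, W (θⁿ x)))` of a path `x`, with `θ` the shift. -/
def birkhoffExp (φ : F → ℝ) (W : (ℕ → E) →ᵇ F) (k : ℕ) (x : ℕ → E) : ℝ≥0∞ :=
  expENN (φ (birkhoffSum seqShift W k x))

lemma IsSuperadditiveContraction.birkhoffExp_le (hφ : IsSuperadditiveContraction φ)
    (W : (ℕ → E) →ᵇ F) (k : ℕ) (x : ℕ → E) : birkhoffExp φ W k x ≤ expENN (k * ‖W‖) :=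
  expENN_le_expENN.2 ((hφ.le_norm _).trans (norm_birkhoffSum_le W _ k x))

lemma IsSuperadditiveContraction.le_birkhoffExp (hφ : IsSuperadditiveContraction φ)
    (W : (ℕ → E) →ᵇ F) (k : ℕ) (x : ℕ → E) : expENN (-(k * ‖W‖)) ≤ birkhoffExp φ W k x :=
  expENN_le_expENN.2 ((neg_le_neg (norm_birkhoffSum_le W _ k x)).trans (hφ.neg_norm_le _))

variable [SecondCountableTopology E] [MeasurableSpace E] [BorelSpace E]

lemma IsSuperadditiveContraction.measurable_birkhoffExp (hφ : IsSuperadditiveContraction φ)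
    (W : (ℕ → E) →ᵇ F) (k : ℕ) : Measurable (birkhoffExp φ W k) :=
  measurable_expENN.comp
    (hφ.continuous.comp (continuous_birkhoffSum W continuous_seqShift k)).measurable

lemma IsSuperadditiveContraction.prependStable (hφ : IsSuperadditiveContraction φ)
    (W : (ℕ → E) →ᵇ F) (k : ℕ) (A : Set E) :
    PrependStable A (2 * ‖W‖) (birkhoffExp φ W k) where
  measurable := hφ.measurable_birkhoffExp W k
  prepend_le v _ x _ := hφ.expENN_le <| by
    rw [norm_sub_rev]
    exact norm_birkhoffSum_apply_sub_le W seqShift k (prepend v x)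
  le_prepend v _ x _ := hφ.expENN_le <|
    norm_birkhoffSum_apply_sub_le W seqShift k (prepend v x)

end BirkhoffExp

section BirkhoffExpChain

variable {E F : Type*} [NormedAddCommGroup E] [SecondCountableTopology E] [MeasurableSpace E]
  [BorelSpace E] [NormedAddCommGroup F] {S : E → E} {μ : Measure E} [IsProbabilityMeasure μ]
  {A : Set E} {φ : F → ℝ} {ε : ℝ}

lemma IsMixingChain.exists_pathExp_birkhoffExp_le (hC : IsMixingChain S μ A)
    (hφ : IsSuperadditiveContraction φ) (W : (ℕ → E) →ᵇ F) (hε : 0 < ε) :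
    ∃ C : ℝ, ∀ k : ℕ, ∀ u ∈ A, ∀ u' ∈ A, pathExp S μ u (birkhoffExp φ W k) ≤
      expENN (ε * k + C) * pathExp S μ u' (birkhoffExp φ W k) := by
  obtain ⟨δ, hδ, c, hharnack⟩ := hC.exists_harnack (w := 2 * ‖W‖) (by positivity)
  obtain ⟨L, hL, r, hLr⟩ := exists_norm_birkhoffSum_sub_le hC.isCompact W hε
  refine ⟨L * (2 * δ) + c, fun k => ?_⟩
  rw [← add_assoc]
  refine hharnack (hφ.prependStable W k A) (expENN_ne_top _) (fun x _ => hφ.birkhoffExp_le W k x)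
    (n := k + r) fun x x' hx hx' hxx' => hφ.expENN_le ((hLr k x x' hx hx').trans ?_)
  gcongr
  calc ∑ j ∈ Finset.range (k + r), ‖x j - x' j‖
      ≤ ∑ j ∈ Finset.range (k + r), (1 / 2 : ℝ) ^ j * δ :=
        Finset.sum_le_sum fun j hj => hxx' j (Finset.mem_range.1 hj).le
    _ = (∑ j ∈ Finset.range (k + r), (1 / 2 : ℝ) ^ j) * δ := by rw [Finset.sum_mul]
    _ ≤ 2 * δ := by gcongr; exact sum_geometric_two_le _

lemma IsMixingChain.exists_mul_pathExp_birkhoffExp_mul_le (hC : IsMixingChain S μ A)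
    (hφ : IsSuperadditiveContraction φ) (W W' : (ℕ → E) →ᵇ F) (hε : 0 < ε) :
    ∃ C : ℝ, ∀ (k l : ℕ) {c : ℝ≥0∞}, (∀ v ∈ A, c ≤ pathExp S μ v (birkhoffExp φ W' l)) →
      ∀ u ∈ A, pathExp S μ u (birkhoffExp φ W k) * c ≤ expENN (ε * k + C) * pathExp S μ u fun x =>
        expENN (φ (birkhoffSum seqShift W k x + birkhoffSum seqShift W' l (seqShift^[k] x))) := by
  obtain ⟨L, -, r, hLr⟩ := exists_norm_birkhoffSum_sub_le hC.isCompact W hε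
  refine ⟨r * (2 * ‖W'‖), fun k l c hc u hu => ?_⟩
  have hmarkov := hC.isInvariantChain.mul_pathExp_mul_le (a := expENN (-(ε * k)))
    (hφ.measurable_birkhoffExp W' l) hc (k + r) (hφ.measurable_birkhoffExp W k)
    (hφ.measurable_birkhoffExp W k) (fun x x' hx hx' hxx' => ?_) hu
  · rw [mul_assoc, expENN_neg_mul_le_iff] at hmarkov
    rw [expENN_add, mul_assoc, ← pathExp_const_mul (expENN_ne_top _)]
    refine hmarkov.trans ?_
    gcongr
    refine hC.isInvariantChain.pathExp_mono hu fun x _ => ?_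
    rw [birkhoffExp, birkhoffExp, ← expENN_add, ← expENN_add, expENN_le_expENN, add_comm k r,
      Function.iterate_add_apply]
    linarith [hφ.le_add_norm_sub (birkhoffSum seqShift W' l (seqShift^[r] (seqShift^[k] x)))
        (birkhoffSum seqShift W' l (seqShift^[k] x)),
      norm_birkhoffSum_iterate_sub_le W' seqShift l r (seqShift^[k] x),
      hφ.add_le_map_add (birkhoffSum seqShift W k x)
        (birkhoffSum seqShift W' l (seqShift^[k] x))]
  · rw [expENN_neg_mul_le_iff]
    refine hφ.expENN_le ((hLr k x' x hx' hx).trans_eq ?_)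
    rw [Finset.sum_eq_zero fun j hj => by rw [hxx' j (Finset.mem_range.1 hj), sub_self, norm_zero],
      mul_zero, add_zero]

end BirkhoffExpChain

/-! ### Exponential growth rates -/

section Fekete

variable {a : ℕ → ℝ} {b : ℝ} {k : ℕ}

lemma mul_add_le_of_forall_add_le (h : ∀ l, b + a l ≤ a (k + l)) (n s : ℕ) :
    n * b + a s ≤ a (k * n + s) := by
  induction n with
  | zero => simp
  | succ n ih =>
    rw [show k * (n + 1) + s = k + (k * n + s) by ring]
    push_cast
    linarith [h (k * n + s)]

lemma exists_mul_div_sub_le_of_forall_add_le (hk : 0 < k) (h : ∀ l, b + a l ≤ a (k + l)) :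
    ∃ D : ℝ, ∀ N : ℕ, N * (b / k) - D ≤ a N := by
  refine ⟨|b| + ∑ s ∈ Finset.range k, |a s|, fun N => ?_⟩
  have hblocks := mul_add_le_of_forall_add_le h (N / k) (N % k)
  rw [Nat.div_add_mod] at hblocks
  have hN : (N : ℝ) = k * (N / k : ℕ) + (N % k : ℕ) := mod_cast (Nat.div_add_mod N k).symm
  have hremainder : ((N % k : ℕ) : ℝ) * (b / k) ≤ |b| := by
    calc ((N % k : ℕ) : ℝ) * (b / k) ≤ (N % k : ℕ) * |b / k| := by gcongr; exact le_abs_self _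
      _ ≤ k * |b / k| := by gcongr; exact (Nat.mod_lt N hk).le
      _ = |b| := by rw [abs_div, Nat.abs_cast]; field_simp
  have hrest : -∑ s ∈ Finset.range k, |a s| ≤ a (N % k) :=
    (neg_le_neg (Finset.single_le_sum (f := fun s => |a s|) (fun s _ => abs_nonneg (a s))
      (Finset.mem_range.2 (Nat.mod_lt N hk)))).trans (neg_abs_le _)
  calc N * (b / k) - (|b| + ∑ s ∈ Finset.range k, |a s|)
      = (N / k : ℕ) * b + ((N % k : ℕ) * (b / k) - |b| - ∑ s ∈ Finset.range k, |a s|) := by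
        rw [hN]; field_simp; ring
    _ ≤ (N / k : ℕ) * b + a (N % k) := by gcongr; linarith
    _ ≤ a N := hblocks

lemma exists_tendsto_div_of_approx_superadditive {w : ℝ} (hw : ∀ k, |a k| ≤ k * w)
    (h : ∀ ε > 0, ∃ C : ℝ, ∀ k l, a k + a l ≤ a (k + l) + (ε * k + C)) :
    ∃ ψ, Tendsto (fun k : ℕ => a k / k) atTop (𝓝 ψ) := by
  have hbdd (k : ℕ) : |a k / k| ≤ |w| := by
    rcases k.eq_zero_or_pos with rfl | hk
    · simp
    · rw [abs_div, Nat.abs_cast, div_le_iff₀ (by positivity), mul_comm]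
      exact (hw k).trans (by gcongr; exact le_abs_self w)
  have hbelow : IsBoundedUnder (· ≥ ·) atTop fun k : ℕ => a k / k :=
    isBoundedUnder_of ⟨-|w|, fun k => (abs_le.1 (hbdd k)).1⟩
  have habove : IsBoundedUnder (· ≤ ·) atTop fun k : ℕ => a k / k :=
    isBoundedUnder_of ⟨|w|, fun k => (abs_le.1 (hbdd k)).2⟩
  refine ⟨_, tendsto_of_le_liminf_of_limsup_le ?_ le_rfl habove hbelow⟩
  refine le_of_forall_lt fun c hc => ?_
  obtain ⟨c', hcc', hc'⟩ := exists_between hc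
  obtain ⟨c'', hcc'', hc''⟩ := exists_between hcc'
  obtain ⟨C, hC⟩ := h ((c' - c'') / 2) (by linarith)
  have hsmall : ∀ᶠ k : ℕ in atTop, C / k < (c' - c'') / 2 :=
    (tendsto_const_div_atTop_nhds_zero_nat C).eventually_lt_const (by linarith)
  obtain ⟨k, hck, hCk, hk⟩ := ((frequently_lt_of_lt_limsup hbelow.isCoboundedUnder_le
    hc').and_eventually (hsmall.and (eventually_gt_atTop 0))).exists
  obtain ⟨D, hD⟩ := exists_mul_div_sub_le_of_forall_add_le hk (a := a)
    (b := a k - ((c' - c'') / 2 * k + C)) fun l => by linarith [hC k l]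
  have hk' : (0 : ℝ) < k := Nat.cast_pos.2 hk
  have hblock : c'' < (a k - ((c' - c'') / 2 * k + C)) / k := by
    rw [lt_div_iff₀ hk'] at hck ⊢
    rw [div_lt_iff₀ hk'] at hCk
    linarith
  refine hcc''.trans_le (le_liminf_of_le habove.isCoboundedUnder_ge ?_)
  filter_upwards [(tendsto_const_div_atTop_nhds_zero_nat D).eventually_lt_const
    (sub_pos.2 hblock), eventually_gt_atTop 0] with N hDN hN
  have hN' : (0 : ℝ) < N := Nat.cast_pos.2 hN
  rw [div_lt_iff₀ hN'] at hDN
  rw [le_div_iff₀ hN']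
  linarith [hD N]

lemma eventually_le_natCast_mul (C : ℝ) {ε : ℝ} (hε : 0 < ε) : ∀ᶠ k : ℕ in atTop, C ≤ k * ε :=
  (tendsto_natCast_atTop_atTop.atTop_mul_const hε).eventually_ge_atTop C

lemma le_of_frequently_mul_le {a b C : ℝ} (h : ∃ᶠ k : ℕ in atTop, k * a ≤ k * b + C) :
    a ≤ b := by
  by_contra! hlt
  obtain ⟨k, hle, hgt⟩ :=
    (h.and_eventually (eventually_le_natCast_mul (C + 1) (sub_pos.2 hlt))).exists
  linarith

end Fekete

section GrowthRate

/-- The expectation of `G k` along the chain grows like `exp (k * ψ)`, uniformly with respect to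
the starting point in `A`. -/
def IsGrowthRate {E : Type*} [Add E] [MeasurableSpace E] (S : E → E) (μ : Measure E) (A : Set E)
    (G : ℕ → (ℕ → E) → ℝ≥0∞) (ψ : ℝ) : Prop :=
  ∀ ε > 0, ∀ᶠ k : ℕ in atTop, ∀ u ∈ A,
    expENN (k * (ψ - ε)) ≤ pathExp S μ u (G k) ∧ pathExp S μ u (G k) ≤ expENN (k * (ψ + ε))

variable {E F : Type*} [NormedAddCommGroup E] [SecondCountableTopology E] [MeasurableSpace E]
  [BorelSpace E] [NormedAddCommGroup F] {S : E → E} {μ : Measure E} {A : Set E} {φ : F → ℝ}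
  [IsProbabilityMeasure μ]

lemma IsMixingChain.exists_iInf_pathExp_birkhoffExp_eq (hC : IsMixingChain S μ A)
    (hφ : IsSuperadditiveContraction φ) (W : (ℕ → E) →ᵇ F) (k : ℕ) :
    ∃ a : ℝ, ⨅ u ∈ A, pathExp S μ u (birkhoffExp φ W k) = expENN a ∧ |a| ≤ k * ‖W‖ := by
  have hge : expENN (-(k * ‖W‖)) ≤ ⨅ u ∈ A, pathExp S μ u (birkhoffExp φ W k) :=
    le_iInf₂ fun u hu =>
      hC.isInvariantChain.le_pathExp_of_forall_le hu fun x _ => hφ.le_birkhoffExp W k x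
  have hle : ⨅ u ∈ A, pathExp S μ u (birkhoffExp φ W k) ≤ expENN (k * ‖W‖) := by
    obtain ⟨v, hv⟩ := hC.nonempty
    exact (iInf₂_le v hv).trans
      (hC.isInvariantChain.pathExp_le_of_forall_le hv fun x _ => hφ.birkhoffExp_le W k x)
  obtain ⟨a, ha⟩ := exists_eq_expENN ((expENN_pos _).trans_le hge).ne'
    (ne_top_of_le_ne_top (expENN_ne_top _) hle)
  exact ⟨a, ha, abs_le.2 ⟨expENN_le_expENN.1 (ha ▸ hge), expENN_le_expENN.1 (ha ▸ hle)⟩⟩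

lemma IsMixingChain.exists_iInf_mul_iInf_le (hC : IsMixingChain S μ A)
    (hφ : IsSuperadditiveContraction φ) (W : (ℕ → E) →ᵇ F) {ε : ℝ} (hε : 0 < ε) :
    ∃ C : ℝ, ∀ k l, (⨅ u ∈ A, pathExp S μ u (birkhoffExp φ W k)) *
        (⨅ u ∈ A, pathExp S μ u (birkhoffExp φ W l)) ≤
      expENN (ε * k + C) * ⨅ u ∈ A, pathExp S μ u (birkhoffExp φ W (k + l)) := by
  obtain ⟨C, hsuper⟩ := hC.exists_mul_pathExp_birkhoffExp_mul_le hφ W W hε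
  refine ⟨C, fun k l => expENN_neg_mul_le_iff.1 (le_iInf₂ fun u hu => expENN_neg_mul_le_iff.2 ?_)⟩
  have h := hsuper k l (fun v hv => iInf₂_le v hv) u hu
  simp only [← birkhoffSum_add] at h
  exact (mul_le_mul_left (iInf₂_le u hu) _).trans h

lemma IsMixingChain.exists_isGrowthRate (hC : IsMixingChain S μ A)
    (hφ : IsSuperadditiveContraction φ) (W : (ℕ → E) →ᵇ F) :
    ∃ ψ, IsGrowthRate S μ A (birkhoffExp φ W) ψ := by
  choose a ha ha_abs using hC.exists_iInf_pathExp_birkhoffExp_eq hφ W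
  have ha_super (ε : ℝ) (hε : 0 < ε) : ∃ C : ℝ, ∀ k l, a k + a l ≤ a (k + l) + (ε * k + C) := by
    obtain ⟨C, hsuper⟩ := hC.exists_iInf_mul_iInf_le hφ W hε
    refine ⟨C, fun k l => ?_⟩
    rw [← expENN_le_expENN, add_comm (a (k + l)), expENN_add, expENN_add, ← ha, ← ha, ← ha]
    exact hsuper k l
  obtain ⟨ψ, hψ⟩ := exists_tendsto_div_of_approx_superadditive ha_abs ha_super
  refine ⟨ψ, fun ε hε => ?_⟩
  obtain ⟨C, hharnack⟩ := hC.exists_pathExp_birkhoffExp_le hφ W (half_pos (half_pos hε))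
  filter_upwards [hψ.eventually (Icc_mem_nhds (sub_lt_self ψ (half_pos hε))
    (lt_add_of_pos_right ψ (half_pos hε))), eventually_gt_atTop 0,
    (tendsto_const_div_atTop_nhds_zero_nat C).eventually_lt_const (half_pos (half_pos hε))]
    with k ⟨hlow, hup⟩ hk hCk u hu
  have hk' : (0 : ℝ) < k := Nat.cast_pos.2 hk
  rw [le_div_iff₀ hk'] at hlow
  rw [div_le_iff₀ hk'] at hup
  rw [div_lt_iff₀ hk'] at hCk
  have hmin : expENN (a k) ≤ pathExp S μ u (birkhoffExp φ W k) := ha k ▸ iInf₂_le u hu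
  have hmax : pathExp S μ u (birkhoffExp φ W k) ≤ expENN (ε / 2 / 2 * k + C) * expENN (a k) :=
    ha k ▸ expENN_neg_mul_le_iff.1
      (le_iInf₂ fun u' hu' => expENN_neg_mul_le_iff.2 (hharnack k u hu u' hu'))
  refine ⟨le_trans ?_ hmin, hmax.trans ?_⟩
  · rw [expENN_le_expENN]
    nlinarith
  · rw [← expENN_add, expENN_le_expENN]
    linarith

end GrowthRate

/-! ### Concavity of growth rates and linearization -/

section Linearization

variable {E F : Type*} [NormedAddCommGroup F] [NormedSpace ℝ F] {φ : F → ℝ}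

lemma norm_add_smul_combo_sub_eq {a b : ℝ} (hab : a + b = 1) (x y : F) (k l : ℝ) :
    ‖(k + l) • (a • x + b • y) - (k • x + l • y)‖ = |a * l - b * k| * ‖x - y‖ := by
  rw [← Real.norm_eq_abs, ← norm_smul]
  congr 1
  obtain rfl : b = 1 - a := by linarith
  module

lemma abs_mul_floor_sub_mul_floor_le {a b : ℝ} (ha : 0 ≤ a) (hb : 0 ≤ b) (hab : a + b = 1)
    (n : ℕ) : |a * ⌊b * n⌋₊ - b * ⌊a * n⌋₊| ≤ 1 := by
  have hk := Nat.floor_le (show 0 ≤ a * n by positivity)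
  have hk' := Nat.lt_floor_add_one (a * n)
  have hl := Nat.floor_le (show 0 ≤ b * n by positivity)
  have hl' := Nat.lt_floor_add_one (b * n)
  rw [abs_le]
  constructor <;> nlinarith

lemma birkhoffSum_sub_const [TopologicalSpace E] (f : E → E) (W : E →ᵇ F) (z : F) (k : ℕ) (x : E) :
    birkhoffSum f (W - const E z) k x = birkhoffSum f W k x - (k : ℝ) • z := by
  simp [birkhoffSum, Finset.sum_sub_distrib, Nat.cast_smul_eq_nsmul]

lemma natCast_smul_birkhoffAverage (f : E → E) (g : E → F) (k : ℕ) (x : E) :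
    (k : ℝ) • birkhoffAverage ℝ f g k x = birkhoffSum f g k x := by
  rcases eq_or_ne k 0 with rfl | hk
  · simp
  · exact smul_inv_smul₀ (Nat.cast_ne_zero.2 hk) _

lemma norm_birkhoffAverage_le [TopologicalSpace E] (W : E →ᵇ F) (f : E → E) (k : ℕ) (x : E) :
    ‖birkhoffAverage ℝ f W k x‖ ≤ ‖W‖ := by
  rcases k.eq_zero_or_pos with rfl | hk
  · simp
  · rw [birkhoffAverage, norm_smul, norm_inv, Real.norm_natCast, inv_mul_le_iff₀ (by positivity)]
    exact norm_birkhoffSum_le W f k x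

lemma combo_nonpos_of_eventually_floor_le {a b α β C : ℝ} (ha : 0 < a) (hb : 0 < b)
    (h : ∀ᶠ n : ℕ in atTop, ⌊a * n⌋₊ * α + ⌊b * n⌋₊ * β ≤ C) : a * α + b * β ≤ 0 := by
  have hfloor {t : ℝ} (ht : 0 < t) (γ : ℝ) (n : ℕ) : n * (t * γ) ≤ ⌊t * n⌋₊ * γ + |γ| := by
    have hle := Nat.floor_le (show 0 ≤ t * n by positivity)
    have hlt := Nat.lt_floor_add_one (t * n)
    nlinarith [le_abs_self γ, neg_abs_le γ]
  refine le_of_frequently_mul_le (C := C + |α| + |β|) (h.mono fun n hn => ?_).frequently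
  linarith [hfloor ha α n, hfloor hb β n]

lemma IsSuperadditiveContraction.expENN_birkhoffSum_add_le [TopologicalSpace E]
    (hφ : IsSuperadditiveContraction φ) (W : (ℕ → E) →ᵇ F) (x y : F) {a b : ℝ} (hab : a + b = 1)
    {k l : ℕ} (hkl : |a * l - b * k| ≤ 1) (p : ℕ → E) :
    expENN (φ (birkhoffSum seqShift (W - const (ℕ → E) x) k p +
        birkhoffSum seqShift (W - const (ℕ → E) y) l (seqShift^[k] p))) ≤
      expENN ‖x - y‖ * birkhoffExp φ (W - const _ (a • x + b • y)) (k + l) p := by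
  refine hφ.expENN_le ?_
  rw [birkhoffSum_sub_const, birkhoffSum_sub_const, birkhoffSum_sub_const, birkhoffSum_add,
    Nat.cast_add]
  calc _ = ‖((k : ℝ) + l) • (a • x + b • y) - ((k : ℝ) • x + (l : ℝ) • y)‖ := by congr 1; abel
    _ ≤ 1 * ‖x - y‖ := by rw [norm_add_smul_combo_sub_eq hab]; gcongr
    _ = ‖x - y‖ := one_mul _

lemma IsSuperadditiveContraction.exists_birkhoffExp_comp_le_sum [TopologicalSpace E]
    [FiniteDimensional ℝ F] (hφ : IsSuperadditiveContraction φ) (W : (ℕ → E) →ᵇ F)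
    (ℓ : F →L[ℝ] ℝ) {ε : ℝ} (hε : 0 < ε) :
    ∃ t : Finset F, ∀ k p,
      birkhoffExp (fun a => a) (ℓ.compLeftContinuousBounded (ℕ → E) W) k p ≤
        ∑ z ∈ t, expENN (k * (ℓ z + ε)) * birkhoffExp φ (W - const _ z) k p := by
  have : ProperSpace F := FiniteDimensional.proper_real F
  obtain ⟨t, -, ht, hcover⟩ := (isCompact_closedBall (0 : F) ‖W‖).finite_cover_balls
    (show 0 < ε / (‖ℓ‖ + 1) by positivity)
  refine ⟨ht.toFinset, fun k p => ?_⟩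
  obtain ⟨z, hzt, hz⟩ := Set.mem_iUnion₂.1
    (hcover (mem_closedBall_zero_iff.2 (norm_birkhoffAverage_le W seqShift k p)))
  have hz' : (‖ℓ‖ + 1) * ‖birkhoffAverage ℝ seqShift W k p - z‖ ≤ ε := by
    rw [mem_ball_iff_norm, lt_div_iff₀' (by positivity)] at hz
    exact hz.le
  have hlin : birkhoffSum seqShift (ℓ.compLeftContinuousBounded (ℕ → E) W) k p =
      k * ℓ (birkhoffAverage ℝ seqShift W k p) := by
    rw [← smul_eq_mul, ← map_smul, natCast_smul_birkhoffAverage]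
    exact (map_birkhoffSum ℓ _ _ _ _).symm
  have hφ_ge : -(k * ‖birkhoffAverage ℝ seqShift W k p - z‖) ≤
      φ ((k : ℝ) • (birkhoffAverage ℝ seqShift W k p - z)) := by
    simpa [norm_smul] using hφ.neg_norm_le ((k : ℝ) • (birkhoffAverage ℝ seqShift W k p - z))
  have hℓ_le : ℓ (birkhoffAverage ℝ seqShift W k p) ≤
      ℓ z + ‖ℓ‖ * ‖birkhoffAverage ℝ seqShift W k p - z‖ := by
    rw [← sub_le_iff_le_add', ← map_sub]
    exact (Real.le_norm_self _).trans (ℓ.le_opNorm _)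
  refine le_trans ?_ (Finset.single_le_sum (fun _ _ => zero_le) (ht.mem_toFinset.2 hzt))
  rw [birkhoffExp, birkhoffExp, ← expENN_add, expENN_le_expENN, birkhoffSum_sub_const, hlin,
    ← natCast_smul_birkhoffAverage seqShift W, ← smul_sub]
  refine le_trans ?_ (add_le_add_right hφ_ge _)
  rw [← sub_eq_add_neg, ← mul_sub]
  gcongr
  linarith

variable [NormedAddCommGroup E] [SecondCountableTopology E] [MeasurableSpace E] [BorelSpace E]
  {S : E → E} {μ : Measure E} {A : Set E} [IsProbabilityMeasure μ]

lemma IsMixingChain.combo_le_growthRate (hC : IsMixingChain S μ A)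
    (hφ : IsSuperadditiveContraction φ) {W : (ℕ → E) →ᵇ F} {x y : F} {a b ψx ψy ψ : ℝ}
    (ha : 0 < a) (hb : 0 < b) (hab : a + b = 1)
    (hx : IsGrowthRate S μ A (birkhoffExp φ (W - const _ x)) ψx)
    (hy : IsGrowthRate S μ A (birkhoffExp φ (W - const _ y)) ψy)
    (hψ : IsGrowthRate S μ A (birkhoffExp φ (W - const _ (a • x + b • y))) ψ) :
    a * ψx + b * ψy ≤ ψ := by
  -- Run for time `a * n` along `W - x`, then for time `b * n` along `W - y`.
  refine le_of_forall_pos_le_add fun ε hε => ?_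
  have hε3 : 0 < ε / 3 := by positivity
  obtain ⟨C, hsuper⟩ :=
    hC.exists_mul_pathExp_birkhoffExp_mul_le hφ (W - const _ x) (W - const _ y) hε3
  obtain ⟨u, hu⟩ := hC.nonempty
  have hfloor {t : ℝ} (ht : 0 < t) : Tendsto (fun n : ℕ => ⌊t * n⌋₊) atTop atTop :=
    (tendsto_nat_floor_mul_atTop t ht).comp tendsto_natCast_atTop_atTop
  suffices h : ∀ᶠ n : ℕ in atTop, ⌊a * n⌋₊ * (ψx - ψ - ε) + ⌊b * n⌋₊ * (ψy - ψ - ε) ≤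
      C + ‖x - y‖ by
    linear_combination combo_nonpos_of_eventually_floor_le ha hb h + (ψ + ε) * hab
  filter_upwards [(hfloor ha).eventually (hx _ hε3), (hfloor hb).eventually (hy _ hε3),
    ((hfloor ha).atTop_add_atTop (hfloor hb)).eventually (hψ _ hε3)] with n hkx hly hψn
  have herr := abs_mul_floor_sub_mul_floor_le ha.le hb.le hab n
  generalize ⌊a * n⌋₊ = k at *
  generalize ⌊b * n⌋₊ = l at *
  have hchain : expENN (k * (ψx - ε / 3)) * expENN (l * (ψy - ε / 3)) ≤
      expENN (ε / 3 * k + C) * (expENN ‖x - y‖ * expENN ((k + l : ℕ) * (ψ + ε / 3))) :=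
    calc _ ≤ _ := mul_le_mul_left (hkx u hu).1 _
      _ ≤ _ := hsuper k l (fun v hv => (hly v hv).1) u hu
      _ ≤ _ := mul_le_mul_right ((hC.isInvariantChain.pathExp_mono hu fun p _ =>
        hφ.expENN_birkhoffSum_add_le W x y hab herr p).trans_eq
          (pathExp_const_mul (expENN_ne_top _))) _
      _ ≤ _ := mul_le_mul_right (mul_le_mul_right (hψn u hu).2 _) _
  rw [← expENN_add, ← expENN_add, ← expENN_add, expENN_le_expENN, Nat.cast_add] at hchain
  linarith [mul_nonneg l.cast_nonneg hε.le]

lemma IsMixingChain.concaveOn_of_isGrowthRate (hC : IsMixingChain S μ A)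
    (hφ : IsSuperadditiveContraction φ) {W : (ℕ → E) →ᵇ F} {f : F → ℝ}
    (hf : ∀ z, IsGrowthRate S μ A (birkhoffExp φ (W - const _ z)) (f z)) :
    ConcaveOn ℝ Set.univ f :=
  concaveOn_iff_forall_pos.2 ⟨convex_univ, fun _ _ _ _ _ _ ha hb hab =>
    hC.combo_le_growthRate hφ ha hb hab (hf _) (hf _) (hf _)⟩

lemma exists_clm_add_le_of_concaveOn [FiniteDimensional ℝ F] {f : F → ℝ}
    (hf : ConcaveOn ℝ Set.univ f) {ε : ℝ} (hε : 0 < ε) :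
    ∃ ℓ : F →L[ℝ] ℝ, ∀ z, ℓ z + f z ≤ f 0 + ε := by
  obtain ⟨ℓ, c, hle, heq⟩ := hf.neg.exists_affine_le_of_lt (𝕜 := ℝ) (Set.mem_univ 0)
    (sub_lt_self _ hε) isClosed_univ (hf.neg.continuousOn isOpen_univ).lowerSemicontinuousOn
  have hc : c = -f 0 - ε := by simpa using heq
  refine ⟨ℓ, fun z => ?_⟩
  have hz : ℓ z + c ≤ -f z := hle ⟨z, Set.mem_univ z⟩
  linarith

/-- A minimax statement: `-‖a‖` is the infimum of the linear forms of norm at most `1`, and the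
growth rate of the exponential of this infimum is already approached by the growth rate of the
exponential of a single linear form. -/
lemma IsMixingChain.exists_clm_growthRate_le [FiniteDimensional ℝ F] (hC : IsMixingChain S μ A)
    (hφ : IsSuperadditiveContraction φ) (W : (ℕ → E) →ᵇ F) {ε : ℝ} (hε : 0 < ε) :
    ∃ ψ, IsGrowthRate S μ A (birkhoffExp φ W) ψ ∧ ∃ ℓ : F →L[ℝ] ℝ, ∀ ψ', IsGrowthRate S μ A
      (birkhoffExp (fun a => a) (ℓ.compLeftContinuousBounded (ℕ → E) W)) ψ' → ψ' ≤ ψ + ε := by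
  choose f hf using fun z => hC.exists_isGrowthRate hφ (W - const _ z)
  have hε4 : 0 < ε / 4 := by positivity
  obtain ⟨ℓ, hℓ⟩ := exists_clm_add_le_of_concaveOn (hC.concaveOn_of_isGrowthRate hφ hf) hε4
  refine ⟨f 0, by simpa [show const (ℕ → E) (0 : F) = 0 from rfl] using hf 0, ℓ, fun ψ' hψ' => ?_⟩
  obtain ⟨t, ht⟩ := hφ.exists_birkhoffExp_comp_le_sum W ℓ hε4
  obtain ⟨u, hu⟩ := hC.nonempty
  have hf_le : ∀ᶠ k : ℕ in atTop, ∀ z ∈ t, pathExp S μ u (birkhoffExp φ (W - const _ z) k) ≤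
      expENN (k * (f z + ε / 4)) :=
    t.eventually_all.2 fun z _ => (hf z _ hε4).mono fun k hk => (hk u hu).2
  refine le_of_frequently_mul_le (C := t.card) (Eventually.frequently ?_)
  filter_upwards [hψ' _ hε4, hf_le] with k hlow hup
  have hchain : expENN (k * (ψ' - ε / 4)) ≤ expENN t.card * expENN (k * (f 0 + 3 * (ε / 4))) := by
    calc _ ≤ _ := (hlow u hu).1
      _ ≤ pathExp S μ u fun p => ∑ z ∈ t,
          expENN (k * (ℓ z + ε / 4)) * birkhoffExp φ (W - const _ z) k p :=
        hC.isInvariantChain.pathExp_mono hu fun p _ => ht k p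
      _ = ∑ z ∈ t, expENN (k * (ℓ z + ε / 4)) *
          pathExp S μ u (birkhoffExp φ (W - const _ z) k) :=
        pathExp_finsetSum hC.isInvariantChain.measurable t (fun _ => expENN_ne_top _)
          fun z => hφ.measurable_birkhoffExp _ k
      _ ≤ ∑ z ∈ t, expENN (k * (f 0 + 3 * (ε / 4))) := by
        refine Finset.sum_le_sum fun z hz => (mul_le_mul_right (hup z hz) _).trans ?_
        rw [← expENN_add, expENN_le_expENN, ← mul_add]
        exact mul_le_mul_of_nonneg_left (by linarith [hℓ z]) k.cast_nonneg
      _ ≤ _ := by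
        rw [Finset.sum_const, nsmul_eq_mul]
        gcongr
        exact natCast_le_expENN _
  rw [← expENN_add, expENN_le_expENN] at hchain
  linarith

end Linearization

/-! ### Empirical measures and Legendre transforms -/

section LogScale

variable {p : ℕ → ℝ≥0∞} {t : ℝ}

lemma inv_natCast_mul_log_expENN {k : ℕ} (hk : 0 < k) (t : ℝ) :
    (((k : ℝ)⁻¹ : ℝ) : EReal) * ENNReal.log (expENN (k * t)) = t := by
  have hk' : (k : ℝ) ≠ 0 := Nat.cast_ne_zero.2 hk.ne'
  rw [expENN, ENNReal.log_ofReal_of_pos (Real.exp_pos _), Real.log_exp, ← EReal.coe_mul,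
    inv_mul_cancel_left₀ hk']

lemma inv_natCast_mul_log_le {a b : ℝ≥0∞} (k : ℕ) (hab : a ≤ b) :
    (((k : ℝ)⁻¹ : ℝ) : EReal) * ENNReal.log a ≤ (((k : ℝ)⁻¹ : ℝ) : EReal) * ENNReal.log b :=
  mul_le_mul_of_nonneg_left (ENNReal.log_monotone hab)
    (EReal.coe_nonneg.2 (inv_nonneg.2 k.cast_nonneg))

lemma limsup_inv_natCast_mul_log_le (h : ∀ᶠ k : ℕ in atTop, p k ≤ expENN (k * t)) :
    limsup (fun k : ℕ => (((k : ℝ)⁻¹ : ℝ) : EReal) * ENNReal.log (p k)) atTop ≤ t := by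
  refine limsup_le_of_le (by isBoundedDefault) ?_
  filter_upwards [h, eventually_gt_atTop 0] with k hpk hk
  exact (inv_natCast_mul_log_le k hpk).trans_eq (inv_natCast_mul_log_expENN hk t)

lemma le_liminf_inv_natCast_mul_log (h : ∀ᶠ k : ℕ in atTop, expENN (k * t) ≤ p k) :
    t ≤ liminf (fun k : ℕ => (((k : ℝ)⁻¹ : ℝ) : EReal) * ENNReal.log (p k)) atTop := by
  refine le_liminf_of_le (by isBoundedDefault) ?_
  filter_upwards [h, eventually_gt_atTop 0] with k hpk hk
  exact (inv_natCast_mul_log_expENN hk t).symm.trans_le (inv_natCast_mul_log_le k hpk)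

end LogScale

lemma UnifLDPof.ldpOf {Z ι : Type*} [TopologicalSpace Z] {A : Set ι}
    {prob : ι → ℕ → Set Z → ℝ≥0∞} {I : Z → ℝ≥0∞}
    (h : UnifLDPof (fun k Γ => ⨅ u ∈ A, prob u k Γ) (fun k Γ => ⨆ u ∈ A, prob u k Γ) I)
    {u : ι} (hu : u ∈ A) : LDPof (prob u) I := by
  refine ⟨fun C hC => ?_, fun U hU => ?_⟩
  · have hupper := (h C).2
    rw [hC.closure_eq] at hupper
    exact (limsup_le_limsup (.of_forall fun k => inv_natCast_mul_log_le k
      (le_iSup₂ (f := fun u _ => prob u k C) u hu))).trans hupper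
  · have hlower := (h U).1
    rw [hU.interior_eq] at hlower
    exact hlower.trans (liminf_le_liminf (.of_forall fun k => inv_natCast_mul_log_le k
      (iInf₂_le (f := fun u _ => prob u k U) u hu)))

section Occ

variable {Z : Type*} [MeasurableSpace Z] {x : ℕ → Z} {k : ℕ}

lemma coe_occ (x : ℕ → Z) (hk : 0 < k) :
    (occ x k : Measure Z) = (k : ℝ≥0∞)⁻¹ • ∑ n ∈ Finset.range k, Measure.dirac (x n) :=
  congrArg Subtype.val (dif_neg hk.ne')

lemma occ_compl_eq_zero {X : Set Z} (hX : MeasurableSet X) (hx : ∀ n, x n ∈ X) (hk : 0 < k) :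
    (occ x k : Measure Z) Xᶜ = 0 := by
  simp [coe_occ x hk, Measure.finsetSum_apply, Measure.dirac_apply' _ hX.compl, hx]

lemma natCast_smul_integral_occ {F : Type*} [NormedAddCommGroup F] [NormedSpace ℝ F]
    [CompleteSpace F] [MeasurableSingletonClass Z] (f : Z → F) (x : ℕ → Z) (hk : 0 < k) :
    (k : ℝ) • ∫ z, f z ∂(occ x k : Measure Z) = ∑ n ∈ Finset.range k, f (x n) := by
  rw [coe_occ x hk, integral_smul_measure,
    integral_finsetSum_measure fun n _ => integrable_dirac enorm_lt_top]
  simp only [integral_dirac, ENNReal.toReal_inv, ENNReal.toReal_natCast]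
  exact smul_inv_smul₀ (Nat.cast_ne_zero.2 hk.ne') _

end Occ

section WeakTopology

variable {Z : Type*} [TopologicalSpace Z] [MeasurableSpace Z]

lemma isCompact_setOf_compl_eq_zero [TopologicalSpace.MetrizableSpace Z] [BorelSpace Z]
    {X : Set Z} (hX : IsCompact X) :
    IsCompact {σ : ProbabilityMeasure Z | (σ : Measure Z) Xᶜ = 0} := by
  let _ := TopologicalSpace.metrizableSpaceMetric Z
  have h := isCompact_setOfPred_probabilityMeasure_mass_eq_compl_isCompact_le (E := Z)
    (u := fun _ => 0) (K := fun _ => X) tendsto_const_nhds (fun _ => hX) (.inr monotone_const)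
  simpa only [nonpos_iff_eq_zero, forall_const, ProbabilityMeasure.null_iff_toMeasure_null] using h

/-- The members of a finite family of bounded continuous functions as the components of one
vector-valued bounded continuous function. -/
def jointBCF (T : Finset (Z →ᵇ ℝ)) : Z →ᵇ (T → ℝ) :=
  BoundedContinuousFunction.ofNormedAddCommGroup (fun z V => (V : Z →ᵇ ℝ) z)
    (continuous_pi fun V => V.1.continuous) (∑ V : T, ‖(V : Z →ᵇ ℝ)‖) fun z =>
      (pi_norm_le_iff_of_nonneg (by positivity)).2 fun V => (V.1.norm_coe_le_norm z).trans
        (Finset.single_le_sum (f := fun V : T => ‖(V : Z →ᵇ ℝ)‖) (fun _ _ => norm_nonneg _)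
          (Finset.mem_univ V))

lemma exists_norm_integral_jointBCF_sub_lt_imp_mem [OpensMeasurableSpace Z]
    {U : Set (ProbabilityMeasure Z)} {σ : ProbabilityMeasure Z} (hU : U ∈ 𝓝 σ) :
    ∃ (T : Finset (Z →ᵇ ℝ)) (r : ℝ), 0 < r ∧ ∀ τ : ProbabilityMeasure Z,
      ‖∫ z, jointBCF T z ∂(τ : Measure Z) - ∫ z, jointBCF T z ∂(σ : Measure Z)‖ < r → τ ∈ U := by
  have hle : (⨅ V : Z →ᵇ ℝ, comap (fun τ : ProbabilityMeasure Z => ∫ z, V z ∂(τ : Measure Z))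
      (𝓝 (∫ z, V z ∂(σ : Measure Z)))) ≤ 𝓝 σ :=
    ProbabilityMeasure.tendsto_iff_forall_integral_tendsto.2 fun V =>
      tendsto_iff_comap.2 (iInf_le _ V)
  obtain ⟨⟨T, ρ⟩, ⟨hT, hρ⟩, hTU⟩ := (HasBasis.iInf' fun V : Z →ᵇ ℝ =>
    Metric.nhds_basis_ball.comap fun τ : ProbabilityMeasure Z =>
      ∫ z, V z ∂(τ : Measure Z)).mem_iff.1 (hle hU)
  have hsmall : ∀ᶠ r : ℝ in 𝓝[>] 0, ∀ V ∈ T, r < ρ V :=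
    hT.eventually_all.2 fun V hV => nhdsWithin_le_nhds (Iio_mem_nhds (hρ V hV))
  obtain ⟨r, hr, hr0⟩ := (hsmall.and self_mem_nhdsWithin).exists
  have heval (τ : ProbabilityMeasure Z) (V : hT.toFinset) :
      (∫ z, jointBCF hT.toFinset z ∂(τ : Measure Z)) V = ∫ z, V.1 z ∂(τ : Measure Z) :=
    eval_integral (fun V => V.1.integrable _) V
  refine ⟨hT.toFinset, r, hr0, fun τ hτ => hTU (Set.mem_iInter₂.2 fun V hV => ?_)⟩
  have hV' := (norm_le_pi_norm _ (⟨V, hT.mem_toFinset.2 hV⟩ : hT.toFinset)).trans_lt hτ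
  rw [Pi.sub_apply, heval, heval] at hV'
  exact mem_ball_iff_norm.2 (hV'.trans (hr V hV))

end WeakTopology

section LegendreRate

variable {Z : Type*} [TopologicalSpace Z] [MeasurableSpace Z] {Q : (Z →ᵇ ℝ) → ℝ}

/-- The Legendre transform `σ ↦ sup_V (⟨V, σ⟩ - Q V)` of a pressure `Q` with `Q 0 ≤ 0`, as a
`ℝ≥0∞`-valued function. -/
def legendreRate (Q : (Z →ᵇ ℝ) → ℝ) (σ : ProbabilityMeasure Z) : ℝ≥0∞ :=
  ⨆ V : Z →ᵇ ℝ, ENNReal.ofReal ((∫ z, V z ∂(σ : Measure Z)) - Q V)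

lemma ofReal_integral_sub_le_legendreRate (Q : (Z →ᵇ ℝ) → ℝ) (V : Z →ᵇ ℝ)
    (σ : ProbabilityMeasure Z) :
    ENNReal.ofReal ((∫ z, V z ∂(σ : Measure Z)) - Q V) ≤ legendreRate Q σ :=
  le_iSup (fun V : Z →ᵇ ℝ => ENNReal.ofReal ((∫ z, V z ∂(σ : Measure Z)) - Q V)) V

lemma exists_add_lt_integral_of_lt_legendreRate (hQ : Q 0 ≤ 0) {c : ℝ}
    {σ : ProbabilityMeasure Z} (hc : (c : EReal) < legendreRate Q σ) :
    ∃ V : Z →ᵇ ℝ, c + Q V < ∫ z, V z ∂(σ : Measure Z) := by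
  rcases lt_or_ge c 0 with hc0 | hc0
  · refine ⟨0, ?_⟩
    simp only [coe_zero, Pi.zero_apply, integral_zero]
    linarith
  · have hc' : ENNReal.ofReal c < legendreRate Q σ := by
      rwa [← EReal.coe_ennreal_lt_coe_ennreal_iff, EReal.coe_ennreal_ofReal, max_eq_left hc0]
    obtain ⟨V, hV⟩ := lt_iSup_iff.1 hc'
    rw [ENNReal.ofReal_lt_ofReal_iff_of_nonneg hc0] at hV
    exact ⟨V, by linarith⟩

lemma lowerSemicontinuous_legendreRate [OpensMeasurableSpace Z] (Q : (Z →ᵇ ℝ) → ℝ) :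
    LowerSemicontinuous (legendreRate Q) :=
  lowerSemicontinuous_iSup fun V => (ENNReal.continuous_ofReal.comp
    ((ProbabilityMeasure.continuous_integral_boundedContinuousFunction V).sub
      continuous_const)).lowerSemicontinuous

variable [TopologicalSpace.MetrizableSpace Z] [BorelSpace Z] {X : Set Z}

lemma exists_bcf_eqOn_zero_integral_pos (hX : IsClosed X) (hne : X.Nonempty)
    {σ : ProbabilityMeasure Z} (hσ : (σ : Measure Z) Xᶜ ≠ 0) :
    ∃ V : Z →ᵇ ℝ, (∀ z ∈ X, V z = 0) ∧ 0 < ∫ z, V z ∂(σ : Measure Z) := by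
  let _ := TopologicalSpace.metrizableSpaceMetric Z
  have hnonneg (z : Z) : 0 ≤ min 1 (Metric.infDist z X) :=
    le_min zero_le_one Metric.infDist_nonneg
  let V : Z →ᵇ ℝ := BoundedContinuousFunction.ofNormedAddCommGroup
    (fun z => min 1 (Metric.infDist z X)) (by fun_prop) 1 fun z =>
      (Real.norm_of_nonneg (hnonneg z)).trans_le (min_le_left _ _)
  refine ⟨V, fun z hz => by simp [V, Metric.infDist_zero_of_mem hz], ?_⟩
  rw [integral_pos_iff_support_of_nonneg (f := V) hnonneg (V.integrable _)]
  refine (pos_iff_ne_zero.2 hσ).trans_le (measure_mono fun z hz => ?_)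
  exact (lt_min zero_lt_one ((hX.notMem_iff_infDist_pos hne).1 hz)).ne'

lemma compl_eq_zero_of_legendreRate_ne_top (hX : IsClosed X) (hne : X.Nonempty)
    (hQ : ∀ V : Z →ᵇ ℝ, (∀ z ∈ X, V z = 0) → Q V ≤ 0) {σ : ProbabilityMeasure Z}
    (hσ : legendreRate Q σ ≠ ⊤) : (σ : Measure Z) Xᶜ = 0 := by
  by_contra hcompl
  obtain ⟨V, hVX, hV⟩ := exists_bcf_eqOn_zero_integral_pos hX hne hcompl
  obtain ⟨n, hn⟩ := exists_nat_gt ((legendreRate Q σ).toReal / ∫ z, V z ∂(σ : Measure Z))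
  rw [div_lt_iff₀ hV] at hn
  have hscaled := (ENNReal.ofReal_le_iff_le_toReal hσ).1
    (ofReal_integral_sub_le_legendreRate Q ((n : ℝ) • V) σ)
  have hintegral : ∫ z, ((n : ℝ) • V) z ∂(σ : Measure Z) = n * ∫ z, V z ∂(σ : Measure Z) :=
    integral_const_mul _ _
  linarith [hQ ((n : ℝ) • V) fun z hz => by simp [hVX z hz]]

lemma exists_finset_exists_add_lt_integral (hX : IsCompact X) (hQ : Q 0 ≤ 0) {c : ℝ}
    {Γ : Set (ProbabilityMeasure Z)} (hc : ∀ σ ∈ closure Γ, (c : EReal) < legendreRate Q σ) :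
    ∃ T : Finset (Z →ᵇ ℝ), ∀ σ ∈ Γ, (σ : Measure Z) Xᶜ = 0 →
      ∃ V ∈ T, c + Q V < ∫ z, V z ∂(σ : Measure Z) := by
  obtain ⟨T, hT⟩ := ((isCompact_setOf_compl_eq_zero hX).inter_left
    (isClosed_closure (s := Γ))).elim_finite_subcover
    (fun V : Z →ᵇ ℝ => {σ : ProbabilityMeasure Z | c + Q V < ∫ z, V z ∂(σ : Measure Z)})
    (fun V => isOpen_lt continuous_const
      (ProbabilityMeasure.continuous_integral_boundedContinuousFunction V))
    fun σ hσ => Set.mem_iUnion.2 (exists_add_lt_integral_of_lt_legendreRate hQ (hc σ hσ.1))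
  refine ⟨T, fun σ hσ hσX => ?_⟩
  obtain ⟨V, hV, hlt⟩ := Set.mem_iUnion₂.1 (hT ⟨subset_closure hσ, hσX⟩)
  exact ⟨V, hV, hlt⟩

lemma goodRate_legendreRate (hX : IsCompact X) (hne : X.Nonempty)
    (hQ : ∀ V : Z →ᵇ ℝ, (∀ z ∈ X, V z = 0) → Q V ≤ 0) : GoodRate (legendreRate Q) :=
  ⟨lowerSemicontinuous_legendreRate Q, fun c hc =>
    (isCompact_setOf_compl_eq_zero hX).of_isClosed_subset
      ((lowerSemicontinuous_legendreRate Q).isClosed_preimage c) fun _ hσ =>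
        compl_eq_zero_of_legendreRate_ne_top hX.isClosed hne hQ (ne_top_of_le_ne_top hc hσ)⟩

end LegendreRate

/-! ### Large deviations for mixing chains -/

section EmpiricalMeasure

variable {E Z : Type*} [TopologicalSpace E] [TopologicalSpace Z] [MeasurableSpace Z]

/-- The empirical measure `k⁻¹ ∑ n < k, δ_{θ(x n, x (n + 1), …)}` of a path `x`: the evaluation
`θ x = x 0` gives the occupation measures and `θ = id` the process-level ones. -/
def empirical (θ : C(ℕ → E, Z)) (k : ℕ) (x : ℕ → E) : ProbabilityMeasure Z :=
  occ (fun n => θ (seqShift^[n] x)) k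

variable {F : Type*} [NormedAddCommGroup F] [NormedSpace ℝ F] [CompleteSpace F]
  {θ : C(ℕ → E, Z)} {k : ℕ}

lemma natCast_smul_integral_empirical [MeasurableSingletonClass Z] (V : Z →ᵇ F) (x : ℕ → E)
    (hk : 0 < k) :
    (k : ℝ) • ∫ z, V z ∂(empirical θ k x : Measure Z) =
      birkhoffSum seqShift (V.compContinuous θ) k x :=
  natCast_smul_integral_occ V _ hk

lemma integral_smul_sub_const [OpensMeasurableSpace Z] [SecondCountableTopology F] (M : ℝ)
    (V : Z →ᵇ F) (m : F) (σ : ProbabilityMeasure Z) :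
    ∫ z, (M • (V - const Z m)) z ∂(σ : Measure Z) = M • ((∫ z, V z ∂(σ : Measure Z)) - m) := by
  borelize F
  simp only [coe_smul, BoundedContinuousFunction.sub_apply, const_apply]
  rw [integral_smul, integral_sub (V.integrable _) (integrable_const m), integral_const,
    probReal_univ, one_smul]

lemma birkhoffExp_neg_norm_le_indicator_add [OpensMeasurableSpace Z] [MeasurableSingletonClass Z]
    [SecondCountableTopology F] {V : Z →ᵇ F} {m : F} {M r : ℝ} (hM : 0 ≤ M)
    {Γ : Set (ProbabilityMeasure Z)}
    (hΓ : ∀ τ : ProbabilityMeasure Z, ‖(∫ z, V z ∂(τ : Measure Z)) - m‖ < r → τ ∈ Γ)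
    (hk : 0 < k) (x : ℕ → E) :
    birkhoffExp (fun a => -‖a‖) ((M • (V - const Z m)).compContinuous θ) k x ≤
      {x | empirical θ k x ∈ Γ}.indicator 1 x + expENN (k * -(M * r)) := by
  rw [birkhoffExp, ← natCast_smul_integral_empirical _ x hk, integral_smul_sub_const,
    norm_smul, norm_smul, Real.norm_natCast, Real.norm_of_nonneg hM]
  by_cases hx : empirical θ k x ∈ Γ
  · rw [Set.indicator_of_mem (show x ∈ {x | empirical θ k x ∈ Γ} from hx), Pi.one_apply,
      ← expENN_zero]
    exact le_add_right (expENN_le_expENN.2 (neg_nonpos.2 (by positivity)))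
  · refine le_add_left (expENN_le_expENN.2 ?_)
    rw [mul_neg, neg_le_neg_iff]
    gcongr
    exact not_lt.1 fun hlt => hx (hΓ _ hlt)

end EmpiricalMeasure

section GrowthRateLimit

variable {E : Type*} [Add E] [MeasurableSpace E] {S : E → E} {μ : Measure E} {A : Set E}
  {G G' : ℕ → (ℕ → E) → ℝ≥0∞} {ψ C : ℝ}

lemma pathExp_le_expENN_mul {u : E} {g g' : (ℕ → E) → ℝ≥0∞} (h : ∀ x, g x ≤ expENN C * g' x) :
    pathExp S μ u g ≤ expENN C * pathExp S μ u g' :=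
  (lintegral_mono fun _ => h _).trans_eq (pathExp_const_mul (expENN_ne_top C))

lemma IsGrowthRate.of_le_mul (h : IsGrowthRate S μ A G ψ)
    (hle : ∀ k x, G' k x ≤ expENN C * G k x) (hge : ∀ k x, G k x ≤ expENN C * G' k x) :
    IsGrowthRate S μ A G' ψ := by
  intro ε hε
  filter_upwards [h (ε / 2) (half_pos hε), eventually_le_natCast_mul C (half_pos hε)]
    with k hk hCk u hu
  constructor
  · refine le_trans ?_ (expENN_neg_mul_le_iff.2 ((hk u hu).1.trans (pathExp_le_expENN_mul (hge k))))
    rw [← expENN_add, expENN_le_expENN]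
    linarith
  · refine (pathExp_le_expENN_mul (hle k)).trans ((mul_le_mul_right (hk u hu).2 _).trans ?_)
    rw [← expENN_add, expENN_le_expENN]
    linarith

lemma IsGrowthRate.tendsto (h : IsGrowthRate S μ A G ψ) {u : E} (hu : u ∈ A) :
    Tendsto (fun k : ℕ => (k : ℝ)⁻¹ * Real.log (pathExp S μ u (G k)).toReal) atTop (𝓝 ψ) := by
  refine Metric.tendsto_nhds.2 fun ε hε => ?_
  filter_upwards [h (ε / 2) (half_pos hε), eventually_gt_atTop 0] with k hrate hk
  obtain ⟨hlow, hup⟩ := hrate u hu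
  obtain ⟨y, hy⟩ := exists_eq_expENN ((expENN_pos _).trans_le hlow).ne'
    (ne_top_of_le_ne_top (expENN_ne_top _) hup)
  rw [hy, expENN_le_expENN] at hlow hup
  have hk' : (0 : ℝ) < k := Nat.cast_pos.2 hk
  rw [hy, expENN, ENNReal.toReal_ofReal (Real.exp_pos y).le, Real.log_exp, Real.dist_eq]
  have hbound : |(k : ℝ)⁻¹ * y - ψ| ≤ ε / 2 := by
    rw [inv_mul_eq_div, abs_sub_le_iff, sub_le_iff_le_add, div_le_iff₀ hk', sub_le_comm,
      le_div_iff₀ hk']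
    constructor <;> linarith
  linarith

end GrowthRateLimit

section Pressure

variable {E Z : Type*} [NormedAddCommGroup E] [MeasurableSpace E] [TopologicalSpace Z]

/-- `Q V` is the growth rate of the exponential moments `𝔼 exp (k ⟨V, ζ_k⟩)` of the empirical
measures `ζ_k = empirical θ k`. -/
def IsPressure (S : E → E) (μ : Measure E) (A : Set E) (θ : C(ℕ → E, Z)) (Q : (Z →ᵇ ℝ) → ℝ) :
    Prop :=
  ∀ V : Z →ᵇ ℝ, IsGrowthRate S μ A (birkhoffExp (fun a => a) (V.compContinuous θ)) (Q V)

variable {S : E → E} {μ : Measure E} {A : Set E} {θ : C(ℕ → E, Z)} {Q : (Z →ᵇ ℝ) → ℝ}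

lemma IsMixingChain.isCompact_image_pi (hC : IsMixingChain S μ A) (θ : C(ℕ → E, Z)) :
    IsCompact (θ '' Set.univ.pi fun _ => A) :=
  (isCompact_univ_pi fun _ => hC.isCompact).image θ.continuous

lemma IsMixingChain.nonempty_image_pi (hC : IsMixingChain S μ A) (θ : C(ℕ → E, Z)) :
    (θ '' Set.univ.pi fun _ => A).Nonempty :=
  (Set.univ_pi_nonempty_iff.2 fun _ => hC.nonempty).image θ

variable [BorelSpace E] [SecondCountableTopology E] [IsProbabilityMeasure μ]

lemma IsMixingChain.exists_isPressure (hC : IsMixingChain S μ A) (θ : C(ℕ → E, Z)) :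
    ∃ Q, IsPressure S μ A θ Q := by
  choose Q hQ using fun V : Z →ᵇ ℝ => hC.exists_isGrowthRate .id (V.compContinuous θ)
  exact ⟨Q, hQ⟩

lemma IsPressure.nonpos_of_forall_eq_zero (hQ : IsPressure S μ A θ Q) (hC : IsMixingChain S μ A)
    {V : Z →ᵇ ℝ} (hV : ∀ z ∈ θ '' Set.univ.pi fun _ => A, V z = 0) : Q V ≤ 0 := by
  obtain ⟨u, hu⟩ := hC.nonempty
  have hone (k : ℕ) : pathExp S μ u (birkhoffExp (fun a => a) (V.compContinuous θ) k) ≤ 1 := by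
    refine hC.isInvariantChain.pathExp_le_of_forall_le hu fun x hx => ?_
    rw [birkhoffExp, birkhoffSum, Finset.sum_eq_zero, expENN_zero]
    intro n _
    exact hV _ ⟨_, fun j _ => seqShift_iterate n x ▸ hx (n + j), rfl⟩
  refine le_of_forall_pos_le_add fun ε hε => ?_
  refine le_of_frequently_mul_le (C := 0) (Eventually.frequently ?_)
  filter_upwards [hQ V ε hε] with k hk
  have hle := (hk u hu).1.trans (hone k)
  rw [← expENN_zero, expENN_le_expENN] at hle
  linarith

lemma IsPressure.goodRate [TopologicalSpace.MetrizableSpace Z] [MeasurableSpace Z] [BorelSpace Z]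
    (hQ : IsPressure S μ A θ Q) (hC : IsMixingChain S μ A) : GoodRate (legendreRate Q) :=
  goodRate_legendreRate (hC.isCompact_image_pi θ) (hC.nonempty_image_pi θ)
    fun _ hV => hQ.nonpos_of_forall_eq_zero hC hV

end Pressure

section LargeDeviations

variable {E Z Ω : Type*} [NormedAddCommGroup E] [SecondCountableTopology E] [MeasurableSpace E]
  [BorelSpace E] [TopologicalSpace Z] [MeasurableSpace Z] [MeasurableSpace Ω]
  {S : E → E} {μ : Measure E} {A : Set E} {θ : C(ℕ → E, Z)} {Q : (Z →ᵇ ℝ) → ℝ}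
  {P : Measure Ω} {Y : Ω → ℕ → E} {u : E} {k : ℕ} {Γ : Set (ProbabilityMeasure Z)} {ε : ℝ}

lemma pathExp_eq_lintegral_of_hasLaw (hS : Measurable S)
    (hY : HasLaw Y (Measure.infinitePi fun _ => μ) P) (u : E) {g : (ℕ → E) → ℝ≥0∞}
    (hg : Measurable g) : pathExp S μ u g = ∫⁻ ω, g (path S u (Y ω)) ∂P :=
  (hY.lintegral_comp (hg.comp (measurable_path_right hS u)).aemeasurable).symm

section PointsMeasurable

variable [MeasurableSingletonClass Z]

lemma measure_lt_integral_empirical_le (hS : Measurable S)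
    (hY : HasLaw Y (Measure.infinitePi fun _ => μ) P) (V : Z →ᵇ ℝ) (c : ℝ) (hk : 0 < k) :
    P {ω | c < ∫ z, V z ∂(empirical θ k (path S u (Y ω)) : Measure Z)} ≤
      expENN (-(k * c)) * pathExp S μ u (birkhoffExp (fun a => a) (V.compContinuous θ) k) := by
  have hmeas := IsSuperadditiveContraction.id.measurable_birkhoffExp (V.compContinuous θ) k
  rw [← neg_neg (k * c), ← expENN_neg_mul_le_iff, neg_neg,
    pathExp_eq_lintegral_of_hasLaw hS hY u hmeas]
  refine (mul_le_mul_right (measure_mono fun ω hω => ?_) _).trans (mul_meas_ge_le_lintegral₀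
    (hmeas.comp (measurable_path_right hS u) |>.comp_aemeasurable hY.aemeasurable) _)
  have hlt : c < ∫ z, V z ∂(empirical θ k (path S u (Y ω)) : Measure Z) := hω
  refine expENN_le_expENN.2 ?_
  rw [neg_neg, ← natCast_smul_integral_empirical V _ hk, smul_eq_mul]
  exact mul_le_mul_of_nonneg_left hlt.le k.cast_nonneg

variable [BorelSpace Z]

lemma pathExp_le_measure_empirical_mem_add {F : Type*} [NormedAddCommGroup F] [NormedSpace ℝ F]
    [CompleteSpace F] [SecondCountableTopology F] [IsProbabilityMeasure P] (hS : Measurable S)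
    (hY : HasLaw Y (Measure.infinitePi fun _ => μ) P) {V : Z →ᵇ F} {m : F} {M r : ℝ}
    (hM : 0 ≤ M)
    (hΓ : ∀ τ : ProbabilityMeasure Z, ‖(∫ z, V z ∂(τ : Measure Z)) - m‖ < r → τ ∈ Γ)
    (hk : 0 < k) (u : E) :
    pathExp S μ u
        (birkhoffExp (fun a => -‖a‖) ((M • (V - const Z m)).compContinuous θ) k) ≤
      P {ω | empirical θ k (path S u (Y ω)) ∈ Γ} + expENN (k * -(M * r)) := by
  rw [pathExp_eq_lintegral_of_hasLaw hS hY u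
    (IsSuperadditiveContraction.neg_norm.measurable_birkhoffExp _ k)]
  calc _ ≤ ∫⁻ ω, {ω | empirical θ k (path S u (Y ω)) ∈ Γ}.indicator 1 ω +
        expENN (k * -(M * r)) ∂P :=
      lintegral_mono fun ω => birkhoffExp_neg_norm_le_indicator_add hM hΓ hk (path S u (Y ω))
    _ ≤ _ := by
      rw [lintegral_add_right _ measurable_const, lintegral_const, measure_univ, mul_one]
      gcongr
      exact lintegral_indicator_one_le _

end PointsMeasurable

variable [BorelSpace Z] [IsProbabilityMeasure μ]

/-- The functional `-k ‖⟨V, ζ_k⟩ - ⟨V, σ⟩‖` is an infimum of linear ones, which all have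
exponential moments of rate at least `-s`; the minimax lemma transfers this bound to it. -/
lemma IsPressure.exists_isGrowthRate_neg_norm {F : Type*} [NormedAddCommGroup F]
    [NormedSpace ℝ F] [FiniteDimensional ℝ F] (hQ : IsPressure S μ A θ Q)
    (hC : IsMixingChain S μ A) {σ : ProbabilityMeasure Z} {s : ℝ}
    (hs : ∀ V : Z →ᵇ ℝ, (∫ z, V z ∂(σ : Measure Z)) - Q V ≤ s) {W : Z →ᵇ F}
    (hW : ∫ z, W z ∂(σ : Measure Z) = 0) (hε : 0 < ε) :
    ∃ ψ, IsGrowthRate S μ A (birkhoffExp (fun a => -‖a‖) (W.compContinuous θ)) ψ ∧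
      -(s + ε) ≤ ψ := by
  have := FiniteDimensional.complete ℝ F
  borelize F
  obtain ⟨ψ, hψ, ℓ, hℓ⟩ := hC.exists_clm_growthRate_le .neg_norm (W.compContinuous θ) hε
  refine ⟨ψ, hψ, ?_⟩
  have hℓW : ∫ z, ℓ.compLeftContinuousBounded Z W z ∂(σ : Measure Z) = 0 :=
    (ℓ.integral_comp_comm (W.integrable _)).trans (by rw [hW, map_zero])
  linarith [hs (ℓ.compLeftContinuousBounded Z W), hℓ _ (hQ (ℓ.compLeftContinuousBounded Z W))]

variable [TopologicalSpace.MetrizableSpace Z]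

lemma IsMixingChain.ae_empirical_compl_eq_zero (hC : IsMixingChain S μ A)
    (hY : HasLaw Y (Measure.infinitePi fun _ => μ) P) (hu : u ∈ A) (hk : 0 < k) :
    ∀ᵐ ω ∂P, (empirical θ k (path S u (Y ω)) : Measure Z)
      (θ '' Set.univ.pi fun _ => A)ᶜ = 0 := by
  have hpath := hC.isInvariantChain.ae_path_mem hu
  rw [← hY.map_eq] at hpath
  filter_upwards [ae_of_ae_map hY.aemeasurable hpath] with ω hω
  refine occ_compl_eq_zero (hC.isCompact_image_pi θ).measurableSet (fun n => ⟨_, ?_, rfl⟩) hk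
  exact fun j _ => seqShift_iterate n (path S u (Y ω)) ▸ hω (n + j)

lemma IsPressure.eventually_iSup_measure_empirical_le (hQ : IsPressure S μ A θ Q)
    (hC : IsMixingChain S μ A) (hY : HasLaw Y (Measure.infinitePi fun _ => μ) P) {c : ℝ}
    (hc : ∀ σ ∈ closure Γ, (c : EReal) < legendreRate Q σ) (hε : 0 < ε) :
    ∀ᶠ k : ℕ in atTop,
      ⨆ u ∈ A, P {ω | empirical θ k (path S u (Y ω)) ∈ Γ} ≤ expENN (k * (-c + ε)) := by
  obtain ⟨T, hT⟩ := exists_finset_exists_add_lt_integral (hC.isCompact_image_pi θ)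
    (hQ.nonpos_of_forall_eq_zero hC fun _ _ => rfl) hc
  have hrate : ∀ᶠ k : ℕ in atTop, ∀ V ∈ T, ∀ u ∈ A,
      pathExp S μ u (birkhoffExp (fun a => a) (V.compContinuous θ) k) ≤
        expENN (k * (Q V + ε / 2)) :=
    T.eventually_all.2 fun V _ => (hQ V _ (half_pos hε)).mono fun k hk u hu => (hk u hu).2
  filter_upwards [hrate, eventually_le_natCast_mul T.card (half_pos hε), eventually_gt_atTop 0]
    with k hrate hcard hk
  refine iSup₂_le fun u hu => ?_
  calc P {ω | empirical θ k (path S u (Y ω)) ∈ Γ}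
      ≤ P (⋃ V ∈ T,
          {ω | c + Q V < ∫ z, V z ∂(empirical θ k (path S u (Y ω)) : Measure Z)}) := by
        refine measure_mono_ae ?_
        filter_upwards [hC.ae_empirical_compl_eq_zero (θ := θ) hY hu hk] with ω hω hωΓ
        obtain ⟨V, hV, hlt⟩ := hT _ hωΓ hω
        exact Set.mem_biUnion hV hlt
    _ ≤ ∑ V ∈ T, P {ω | c + Q V < ∫ z, V z ∂(empirical θ k (path S u (Y ω)) : Measure Z)} :=
        measure_biUnion_finset_le _ _
    _ ≤ ∑ V ∈ T, expENN (k * (-c + ε / 2)) := by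
        refine Finset.sum_le_sum fun V hV => (measure_lt_integral_empirical_le
          hC.isInvariantChain.measurable hY V _ hk).trans ?_
        refine (mul_le_mul_right (hrate V hV u hu) _).trans ?_
        rw [← expENN_add, expENN_le_expENN]
        linarith
    _ ≤ expENN T.card * expENN (k * (-c + ε / 2)) := by
        rw [Finset.sum_const, nsmul_eq_mul]
        gcongr
        exact natCast_le_expENN _
    _ ≤ expENN (k * (-c + ε)) := by
        rw [← expENN_add, expENN_le_expENN]
        linarith

lemma IsPressure.limsup_log_measure_empirical_le (hQ : IsPressure S μ A θ Q)
    (hC : IsMixingChain S μ A) (hY : HasLaw Y (Measure.infinitePi fun _ => μ) P)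
    (Γ : Set (ProbabilityMeasure Z)) :
    limsup (fun k : ℕ => (((k : ℝ)⁻¹ : ℝ) : EReal) *
        ENNReal.log (⨆ u ∈ A, P {ω | empirical θ k (path S u (Y ω)) ∈ Γ})) atTop ≤
      -(⨅ σ ∈ closure Γ, (legendreRate Q σ : EReal)) := by
  rw [EReal.le_neg]
  refine EReal.ge_of_forall_gt_iff_ge.1 fun c hc => ?_
  rw [EReal.le_neg, ← EReal.coe_neg]
  refine EReal.le_of_forall_lt_iff_le.1 fun d hd => ?_
  have hd' : -c < d := EReal.coe_lt_coe_iff.1 hd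
  have hε : 0 < d + c := by linarith
  have hΓ := hQ.eventually_iSup_measure_empirical_le hC hY
    (fun σ hσ => hc.trans_le (iInf₂_le σ hσ)) hε
  simpa only [add_comm d, neg_add_cancel_left] using limsup_inv_natCast_mul_log_le hΓ

lemma IsPressure.eventually_le_iInf_measure_empirical (hQ : IsPressure S μ A θ Q)
    (hC : IsMixingChain S μ A) (hY : HasLaw Y (Measure.infinitePi fun _ => μ) P)
    {σ : ProbabilityMeasure Z} (hσ : Γ ∈ 𝓝 σ) {s : ℝ} (hs0 : 0 ≤ s)
    (hs : ∀ V : Z →ᵇ ℝ, (∫ z, V z ∂(σ : Measure Z)) - Q V ≤ s) (hε : 0 < ε) :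
    ∀ᶠ k : ℕ in atTop,
      expENN (k * -(s + ε)) ≤ ⨅ u ∈ A, P {ω | empirical θ k (path S u (Y ω)) ∈ Γ} := by
  have := hY.isProbabilityMeasure
  obtain ⟨T, r, hr, hΓ⟩ := exists_norm_integral_jointBCF_sub_lt_imp_mem hσ
  have hM : 0 ≤ (s + ε) / r := by positivity
  obtain ⟨ψ, hψ, hsψ⟩ := hQ.exists_isGrowthRate_neg_norm hC hs (ε := ε / 4)
    ((integral_smul_sub_const ((s + ε) / r) (jointBCF T) _ σ).trans
      (by rw [sub_self, smul_zero])) (by positivity)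
  filter_upwards [hψ (ε / 4) (by positivity), eventually_gt_atTop 0,
    eventually_le_natCast_mul (2 : ℕ) (half_pos hε)] with k hrate hk htwo
  refine le_iInf₂ fun u hu => ?_
  have hsum : expENN (k * -(s + ε)) + expENN (k * -(s + ε)) ≤
      P {ω | empirical θ k (path S u (Y ω)) ∈ Γ} + expENN (k * -(s + ε)) := by
    calc expENN (k * -(s + ε)) + expENN (k * -(s + ε))
        = (2 : ℕ) * expENN (k * -(s + ε)) := (two_mul _).symm
      _ ≤ expENN (2 : ℕ) * expENN (k * -(s + ε)) :=
          mul_le_mul_left (natCast_le_expENN 2) _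
      _ ≤ expENN (k * (ψ - ε / 4)) := by
          rw [← expENN_add, expENN_le_expENN]
          have := mul_le_mul_of_nonneg_left hsψ k.cast_nonneg
          linarith
      _ ≤ _ := (hrate u hu).1
      _ ≤ _ := pathExp_le_measure_empirical_mem_add hC.isInvariantChain.measurable hY hM hΓ hk u
      _ = _ := by rw [div_mul_cancel₀ _ hr.ne']
  exact (ENNReal.add_le_add_iff_right (expENN_ne_top _)).1 hsum

lemma IsPressure.le_liminf_log_measure_empirical (hQ : IsPressure S μ A θ Q)
    (hC : IsMixingChain S μ A) (hY : HasLaw Y (Measure.infinitePi fun _ => μ) P)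
    (Γ : Set (ProbabilityMeasure Z)) :
    -(⨅ σ ∈ interior Γ, (legendreRate Q σ : EReal)) ≤
      liminf (fun k : ℕ => (((k : ℝ)⁻¹ : ℝ) : EReal) *
        ENNReal.log (⨅ u ∈ A, P {ω | empirical θ k (path S u (Y ω)) ∈ Γ})) atTop := by
  rw [EReal.neg_le]
  refine le_iInf₂ fun σ hσ => ?_
  rcases eq_or_ne (legendreRate Q σ) ⊤ with htop | hfin
  · exact htop ▸ le_top
  rw [EReal.neg_le, ← EReal.coe_ennreal_toReal hfin, ← EReal.coe_neg]
  refine EReal.ge_of_forall_gt_iff_ge.1 fun c hc => ?_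
  have hε : 0 < -(legendreRate Q σ).toReal - c := sub_pos.2 (EReal.coe_lt_coe_iff.1 hc)
  have hΓ := hQ.eventually_le_iInf_measure_empirical hC hY (mem_interior_iff_mem_nhds.1 hσ)
    ENNReal.toReal_nonneg (fun V => (ENNReal.ofReal_le_iff_le_toReal hfin).1
      (ofReal_integral_sub_le_legendreRate Q V σ)) hε
  simpa using le_liminf_inv_natCast_mul_log hΓ

theorem IsPressure.unifLDPof (hQ : IsPressure S μ A θ Q) (hC : IsMixingChain S μ A)
    (hY : HasLaw Y (Measure.infinitePi fun _ => μ) P) :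
    UnifLDPof (fun k Γ => ⨅ u ∈ A, P {ω | empirical θ k (path S u (Y ω)) ∈ Γ})
      (fun k Γ => ⨆ u ∈ A, P {ω | empirical θ k (path S u (Y ω)) ∈ Γ}) (legendreRate Q) :=
  fun Γ => ⟨hQ.le_liminf_log_measure_empirical hC hY Γ, hQ.limsup_log_measure_empirical_le hC hY Γ⟩

end LargeDeviations

section PressureLimit

lemma sum_Icc_eq_birkhoffSum_seqShift {E : Type*} [TopologicalSpace E] (V : E →ᵇ ℝ) (k : ℕ)
    (x : ℕ → E) :
    ∑ n ∈ Finset.Icc 1 k, V (x n) =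
      birkhoffSum seqShift (V.compContinuous ⟨fun x : ℕ → E => x 0, continuous_apply 0⟩) k
        (seqShift x) := by
  rw [birkhoffSum, Finset.range_eq_Ico, ← Finset.Ico_add_one_right_eq_Icc, ← zero_add 1,
    ← Finset.sum_Ico_add']
  exact Finset.sum_congr rfl fun n _ => by simp [seqShift_iterate, seqShift]

variable {E Ω : Type*} [NormedAddCommGroup E] [SecondCountableTopology E] [MeasurableSpace E]
  [BorelSpace E] [MeasurableSpace Ω] {S : E → E} {μ : Measure E} {A : Set E} {P : Measure Ω}
  {Y : Ω → ℕ → E} {u : E}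

theorem IsPressure.tendsto_inv_mul_log_integral_exp {Q : (E →ᵇ ℝ) → ℝ}
    (hQ : IsPressure S μ A ⟨fun x : ℕ → E => x 0, continuous_apply 0⟩ Q) (hS : Measurable S)
    (hY : HasLaw Y (Measure.infinitePi fun _ => μ) P) (V : E →ᵇ ℝ) (hu : u ∈ A) :
    Tendsto (fun k : ℕ => (k : ℝ)⁻¹ *
        Real.log (∫ ω, Real.exp (∑ n ∈ Finset.Icc 1 k, V (path S u (Y ω) n)) ∂P))
      atTop (𝓝 (Q V)) := by
  set W := V.compContinuous ⟨fun x : ℕ → E => x 0, continuous_apply 0⟩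
  have hmeas (k : ℕ) : Measurable fun x : ℕ → E =>
      birkhoffExp (fun a => a) W k (seqShift x) :=
    (IsSuperadditiveContraction.id.measurable_birkhoffExp W k).comp measurable_seqShift
  have hrate : IsGrowthRate S μ A (fun k x => birkhoffExp (fun a => a) W k (seqShift x)) (Q V) :=
    (hQ V).of_le_mul
      (fun k x => IsSuperadditiveContraction.id.expENN_le (norm_birkhoffSum_apply_sub_le W _ k x))
      fun k x => IsSuperadditiveContraction.id.expENN_le
        ((norm_sub_rev _ _).trans_le (norm_birkhoffSum_apply_sub_le W _ k x))
  refine (hrate.tendsto hu).congr fun k => ?_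
  rw [pathExp_eq_lintegral_of_hasLaw hS hY u (hmeas k)]
  simp only [sum_Icc_eq_birkhoffSum_seqShift]
  rw [integral_eq_lintegral_of_nonneg_ae (ae_of_all _ fun _ => (Real.exp_pos _).le)]
  · rfl
  · exact ((Real.continuous_exp.comp (continuous_birkhoffSum W continuous_seqShift k)).measurable
      |>.comp (measurable_seqShift.comp (measurable_path_right hS u))
      |>.comp_aemeasurable hY.aemeasurable).aestronglyMeasurable

end PressureLimit

/-! ### Translates and supports of the noise -/

section TranslationBound

variable {E : Type*} [MeasurableSpace E] {μ : Measure E} {Δ : E} {c : ℝ}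

lemma translationBound_of_forall_measurable [Sub E]
    (h : ∀ (M : ℝ≥0∞) (φ : E → ℝ≥0∞), Measurable φ → (∀ x, φ x ≤ M) →
      ∫⁻ x, φ x ∂μ ≤ ∫⁻ x, φ (x - Δ) ∂μ + ENNReal.ofReal c * M) :
    TranslationBound μ Δ c := by
  intro M φ hφ
  obtain ⟨ψ, hψ, hψφ, hlintegral⟩ := exists_measurable_le_lintegral_eq μ φ
  rw [hlintegral]
  refine (h M ψ hψ fun x => (hψφ x).trans (hφ x)).trans ?_
  gcongr
  exact hψφ _

lemma TranslationBound.map {F : Type*} [AddGroup E] [AddGroup F] [MeasurableSpace F]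
    [MeasurableSub F] (h : TranslationBound μ Δ c) (f : E →+ F) (hf : Measurable f) :
    TranslationBound (μ.map f) (f Δ) c := by
  refine translationBound_of_forall_measurable fun M φ hφ hφM => ?_
  have hφΔ : Measurable fun y => φ (y - f Δ) := hφ.comp (measurable_sub_const _)
  rw [lintegral_map hφ hf, lintegral_map hφΔ hf]
  simpa only [map_sub] using h M (fun x => φ (f x)) fun x => hφM (f x)

lemma TranslationBound.conv_left [AddGroup E] [MeasurableAdd₂ E] [MeasurableSub E] [SFinite μ]
    (h : TranslationBound μ Δ c) (ν : Measure E) [IsProbabilityMeasure ν] :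
    TranslationBound (ν ∗ μ) Δ c := by
  refine translationBound_of_forall_measurable fun M φ hφ hφM => ?_
  have hφΔ : Measurable fun x => φ (x - Δ) := hφ.comp (measurable_sub_const _)
  rw [Measure.lintegral_conv hφ, Measure.lintegral_conv hφΔ]
  calc ∫⁻ x, ∫⁻ y, φ (x + y) ∂μ ∂ν
      ≤ ∫⁻ x, (∫⁻ y, φ (x + y - Δ) ∂μ + ENNReal.ofReal c * M) ∂ν :=
        lintegral_mono fun x => by
          simpa only [add_sub_assoc] using h M (fun y => φ (x + y)) fun y => hφM _
    _ = _ := by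
        rw [lintegral_add_right _ measurable_const, lintegral_const, measure_univ, mul_one]

lemma TranslationBound.add [AddCommGroup E] {Δ' : E} {c' : ℝ} (h : TranslationBound μ Δ c)
    (h' : TranslationBound μ Δ' c') (hc : 0 ≤ c) (hc' : 0 ≤ c') :
    TranslationBound μ (Δ + Δ') (c + c') := by
  intro M φ hφ
  have hΔ' := h' M (fun x => φ (x - Δ)) fun x => hφ _
  simp only [sub_sub, add_comm Δ'] at hΔ'
  calc ∫⁻ x, φ x ∂μ ≤ ∫⁻ x, φ (x - Δ) ∂μ + ENNReal.ofReal c * M := h M φ hφ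
    _ ≤ ∫⁻ x, φ (x - (Δ + Δ')) ∂μ + ENNReal.ofReal c' * M + ENNReal.ofReal c * M := by gcongr
    _ = _ := by rw [ENNReal.ofReal_add hc hc']; ring

lemma translationBound_sum [AddCommGroup E] {ι : Type*} (s : Finset ι) {Δ : ι → E} {c : ι → ℝ}
    (hc : ∀ i, 0 ≤ c i) (h : ∀ i, TranslationBound μ (Δ i) (c i)) :
    TranslationBound μ (∑ i ∈ s, Δ i) (∑ i ∈ s, c i) := by
  classical
  induction s using Finset.induction_on with
  | empty => intro M φ _; simp
  | insert i s hi ih =>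
    rw [Finset.sum_insert hi, Finset.sum_insert hi]
    exact (h i).add ih (hc i) (Finset.sum_nonneg fun j _ => hc j)

lemma translationBound_withDensity {p : ℝ → ℝ} {L : ℝ≥0} (hL : LipschitzWith L p)
    {a b : ℝ} (hp : Function.support p ⊆ Set.Icc a b) (s : ℝ) :
    TranslationBound ((volume : Measure ℝ).withDensity fun x => ENNReal.ofReal (p x)) s
      (L * |s| * (b - a)) := by
  refine translationBound_of_forall_measurable fun M φ hφ hφM => ?_
  have hpm : Measurable fun x => ENNReal.ofReal (p x) := hL.continuous.measurable.ennreal_ofReal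
  have hshift : ∫⁻ x, ENNReal.ofReal (p x) * φ (x - s) =
      ∫⁻ x, ENNReal.ofReal (p (x + s)) * φ x := by
    simpa only [sub_add_cancel] using
      lintegral_sub_right_eq_self (fun x => ENNReal.ofReal (p (x + s)) * φ x) s
  have hpoint (x : ℝ) : ENNReal.ofReal (p x) * φ x ≤ ENNReal.ofReal (p (x + s)) * φ x +
      (Set.Icc a b).indicator (fun _ => ENNReal.ofReal (L * |s|) * M) x := by
    by_cases hx : x ∈ Set.Icc a b
    · have hdist : p x ≤ p (x + s) + L * |s| := by
        have := (le_abs_self _).trans (hL.dist_le_mul x (x + s))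
        rw [dist_self_add_right, Real.norm_eq_abs] at this
        linarith
      rw [Set.indicator_of_mem hx]
      calc _ ≤ (ENNReal.ofReal (p (x + s)) + ENNReal.ofReal (L * |s|)) * φ x := by
            gcongr
            exact (ENNReal.ofReal_le_ofReal hdist).trans ENNReal.ofReal_add_le
        _ ≤ _ := by rw [add_mul]; gcongr; exact hφM x
    · rw [Function.notMem_support.1 fun h => hx (hp h)]
      simp
  have hφs : Measurable fun x => φ (x - s) := hφ.comp (measurable_sub_const s)
  rw [lintegral_withDensity_eq_lintegral_mul _ hpm hφ,
    lintegral_withDensity_eq_lintegral_mul _ hpm hφs]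
  simp only [Pi.mul_apply, hshift]
  refine (lintegral_mono hpoint).trans_eq ?_
  rw [lintegral_add_right _ (measurable_const.indicator measurableSet_Icc),
    lintegral_indicator_const measurableSet_Icc, Real.volume_Icc, mul_right_comm,
    ← ENNReal.ofReal_mul (by positivity)]

end TranslationBound

section Support

variable {E F : Type*} [TopologicalSpace E] [MeasurableSpace E] [TopologicalSpace F]
  [MeasurableSpace F] {μ ν : Measure E} {x y : E}

lemma mem_msupp_map (hx : x ∈ msupp μ) {f : E → F} (hf : Continuous f) (hfm : AEMeasurable f μ) :
    f x ∈ msupp (μ.map f) := fun U hU =>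
  (hx _ (hf.continuousAt hU)).trans_le (Measure.le_map_apply hfm U)

lemma add_mem_msupp_conv [AddMonoid E] [ContinuousAdd E] [MeasurableAdd₂ E] [SFinite ν]
    (hx : x ∈ msupp μ) (hy : y ∈ msupp ν) : x + y ∈ msupp (μ ∗ ν) := by
  intro U hU
  obtain ⟨V, hV, W, hW, hVW⟩ := mem_nhds_prod_iff.1 (tendsto_add hU)
  calc 0 < μ V * ν W := ENNReal.mul_pos (hx V hV).ne' (hy W hW).ne'
    _ = μ.prod ν (V ×ˢ W) := (Measure.prod_prod V W).symm
    _ ≤ μ.prod ν ((fun z => z.1 + z.2) ⁻¹' U) := measure_mono hVW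
    _ ≤ (μ ∗ ν) U := Measure.le_map_apply measurable_add.aemeasurable U

lemma mem_msupp_withDensity [OpensMeasurableSpace E] [μ.IsOpenPosMeasure] {p : E → ℝ}
    (hp : Continuous p) (hx : 0 < p x) :
    x ∈ msupp (μ.withDensity fun z => ENNReal.ofReal (p z)) := by
  intro U hU
  refine lt_of_lt_of_le ?_ (measure_mono interior_subset)
  rw [withDensity_apply _ isOpen_interior.measurableSet,
    setLIntegral_pos_iff hp.measurable.ennreal_ofReal]
  have hsupp : Function.support (fun z => ENNReal.ofReal (p z)) = p ⁻¹' Set.Ioi 0 := by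
    ext z; simp
  rw [hsupp]
  exact ((isOpen_Ioi.preimage hp).inter isOpen_interior).measure_pos μ
    ⟨x, hx, mem_interior_iff_mem_nhds.2 hU⟩

end Support

/-! ### Random series with independent coefficients -/

section Independence

variable {Ω ι κ 𝓧 : Type*} [MeasurableSpace Ω] [MeasurableSpace 𝓧] {P : Measure Ω}

lemma iIndepFun_pi_of_iIndepFun_prod [IsProbabilityMeasure P] {X : ι → κ → Ω → 𝓧}
    (hX : ∀ i j, Measurable (X i j)) (h : iIndepFun (fun q : ι × κ => X q.1 q.2) P) :
    iIndepFun (fun i ω j => X i j ω) P := by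
  have hprob (i : ι) (j : κ) : IsProbabilityMeasure (P.map (X i j)) :=
    Measure.isProbabilityMeasure_map (hX i j).aemeasurable
  have hmeas : Measurable fun ω (q : ι × κ) => X q.1 q.2 ω :=
    measurable_pi_lambda _ fun q => hX q.1 q.2
  rw [iIndepFun_iff_map_fun_eq_infinitePi_map fun i => measurable_pi_lambda _ (hX i)]
  calc P.map (fun ω i j => X i j ω)
      = (P.map fun ω (q : ι × κ) => X q.1 q.2 ω).map (MeasurableEquiv.curry ι κ 𝓧) :=
        (Measure.map_map (MeasurableEquiv.curry ι κ 𝓧).measurable hmeas).symm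
    _ = Measure.infinitePi fun i => Measure.infinitePi fun j => P.map (X i j) := by
        rw [h.map_fun_eq_infinitePi_map fun q : ι × κ => hX q.1 q.2,
          Measure.infinitePi_map_curry fun i j => P.map (X i j)]
    _ = Measure.infinitePi fun i => P.map fun ω j => X i j ω := by
        congr 1 with i : 1
        exact ((h.precomp (Prod.mk_right_injective i)).map_fun_eq_infinitePi_map (hX i)).symm

lemma indepFun_indicator_compl [Zero 𝓧] {X : ι → Ω → 𝓧} (hX : ∀ i, Measurable (X i))
    (h : iIndepFun X P) (s : Set ι) :
    IndepFun (fun ω => s.indicator fun i => X i ω) (fun ω => sᶜ.indicator fun i => X i ω) P := by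
  have hle (t : Set ι) : MeasurableSpace.comap (fun ω => t.indicator fun i => X i ω)
      MeasurableSpace.pi ≤ ⨆ i ∈ t, MeasurableSpace.comap (X i) inferInstance := by
    rw [MeasurableSpace.pi, MeasurableSpace.comap_iSup]
    refine iSup_le fun i => ?_
    rw [MeasurableSpace.comap_comp]
    by_cases hi : i ∈ t
    · simp only [Function.comp_def, Set.indicator_of_mem hi]
      exact le_iSup₂_of_le i hi le_rfl
    · simp only [Function.comp_def, Set.indicator_of_notMem hi, MeasurableSpace.comap_const,
        bot_le]
  have hindep := indep_iSup_of_disjoint (fun i => (hX i).comap_le) h.iIndep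
    (disjoint_compl_right (a := s))
  exact indep_of_indep_of_le_left (indep_of_indep_of_le_right hindep (hle sᶜ)) (hle s)

lemma zero_mem_msupp_map_sum_range {E : Type*} [AddCommMonoid E] [TopologicalSpace E]
    [MeasurableSpace E] [ContinuousAdd E] [MeasurableAdd₂ E] [IsProbabilityMeasure P]
    {Z : ℕ → Ω → E} (hZ : ∀ j, Measurable (Z j)) (hind : iIndepFun Z P)
    (h0 : ∀ j, 0 ∈ msupp (P.map (Z j))) (N : ℕ) :
    0 ∈ msupp (P.map fun ω => ∑ j ∈ Finset.range N, Z j ω) := by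
  induction N with
  | zero =>
    intro U hU
    simp only [Finset.range_zero, Finset.sum_empty, Measure.map_const, measure_univ, one_smul,
      Measure.dirac_apply_of_mem (mem_of_mem_nhds hU), zero_lt_one]
  | succ N ih =>
    have hsplit : IndepFun (fun ω => ∑ j ∈ Finset.range N, Z j ω) (Z N) P := by
      simpa only [Finset.sum_fn] using hind.indepFun_sum_range_succ hZ N
    have hconv := add_mem_msupp_conv ih (h0 N)
    rw [← hsplit.map_add_eq_map_conv_map (Finset.measurable_sum _ fun j _ => hZ j) (hZ N),
      add_zero] at hconv
    simp only [Finset.sum_range_succ]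
    exact hconv

end Independence

section Series

variable {E : Type*} [NormedAddCommGroup E] [NormedSpace ℝ E]

/-- The sum of the series `∑ x_j v_j`, as a map defined (with junk values where the partial sums
diverge) on all coefficient sequences `x`, so that measurability of random series can be read off
from it. -/
def seriesMap (v : ℕ → E) (x : ℕ → ℝ) : E :=
  limUnder atTop fun N : ℕ => ∑ j ∈ Finset.range N, x j • v j

lemma seriesMap_eq_of_hasSum {v : ℕ → E} {x : ℕ → ℝ} {h : E}
    (hs : HasSum (fun j => x j • v j) h) : seriesMap v x = h :=
  hs.tendsto_sum_nat.limUnder_eq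

variable {Ω : Type*} [MeasurableSpace Ω] {P : Measure Ω} {v : ℕ → E} {X : ℕ → Ω → ℝ} {Y : Ω → E}

lemma exists_measure_norm_sub_sum_range_pos [IsProbabilityMeasure P]
    (hsum : ∀ ω, HasSum (fun j => X j ω • v j) (Y ω)) {ε : ℝ} (hε : 0 < ε) :
    ∃ N, 0 < P {ω | ‖Y ω - ∑ j ∈ Finset.range N, X j ω • v j‖ < ε} := by
  refine exists_measure_pos_of_not_measure_iUnion_null ?_
  have huniv : ⋃ N, {ω | ‖Y ω - ∑ j ∈ Finset.range N, X j ω • v j‖ < ε} = Set.univ := by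
    refine Set.eq_univ_of_forall fun ω => Set.mem_iUnion.2 ?_
    obtain ⟨N, hN⟩ := ((Metric.tendsto_nhds.1 (hsum ω).tendsto_sum_nat) ε hε).exists
    exact ⟨N, by rwa [dist_comm, dist_eq_norm] at hN⟩
  rw [huniv, measure_univ]
  exact one_ne_zero

variable [MeasurableSpace E] [BorelSpace E]

lemma measure_preimage_sum_smul_pos [SecondCountableTopology E] [IsProbabilityMeasure P]
    (hX : ∀ j, Measurable (X j)) (hind : iIndepFun X P) (h0 : ∀ j, 0 ∈ msupp (P.map (X j))) (N : ℕ)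
    {U : Set E} (hU : U ∈ 𝓝 0) (hUm : MeasurableSet U) :
    0 < P ((fun ω => ∑ j ∈ Finset.range N, X j ω • v j) ⁻¹' U) := by
  have hsmul (j : ℕ) : Continuous fun x : ℝ => x • v j := by fun_prop
  have hZ (j : ℕ) : Measurable fun ω => X j ω • v j := (hX j).smul_const _
  have h0Z (j : ℕ) : 0 ∈ msupp (P.map fun ω => X j ω • v j) := by
    have := mem_msupp_map (h0 j) (hsmul j) (hsmul j).measurable.aemeasurable
    rwa [zero_smul, Measure.map_map (hsmul j).measurable (hX j)] at this
  have hsum := zero_mem_msupp_map_sum_range hZ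
    (hind.comp (fun j x => x • v j) fun j => (hsmul j).measurable) h0Z N U hU
  rwa [Measure.map_apply (Finset.measurable_sum _ fun j _ => hZ j) hUm] at hsum

variable [CompleteSpace E]

lemma measurable_seriesMap (v : ℕ → E) : Measurable (seriesMap v) :=
  (StronglyMeasurable.limUnder fun N : ℕ => Continuous.stronglyMeasurable
    (f := fun x : ℕ → ℝ => ∑ j ∈ Finset.range N, x j • v j) (by fun_prop)).measurable

lemma measurable_of_hasSum_smul (hX : ∀ j, Measurable (X j))
    (hsum : ∀ ω, HasSum (fun j => X j ω • v j) (Y ω)) : Measurable Y := by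
  obtain rfl : Y = fun ω => seriesMap v fun j => X j ω :=
    funext fun ω => (seriesMap_eq_of_hasSum (hsum ω)).symm
  exact (measurable_seriesMap v).comp (measurable_pi_lambda _ hX)

lemma indepFun_sum_sub_sum (hX : ∀ j, Measurable (X j)) (hind : iIndepFun X P)
    (hsum : ∀ ω, HasSum (fun j => X j ω • v j) (Y ω)) (s : Finset ℕ) :
    IndepFun (fun ω => ∑ j ∈ s, X j ω • v j) (fun ω => Y ω - ∑ j ∈ s, X j ω • v j) P := by
  have hhead (ω : Ω) : ∑ j ∈ s, X j ω • v j =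
      ∑ j ∈ s, (s : Set ℕ).indicator (fun j => X j ω) j • v j :=
    Finset.sum_congr rfl fun j hj => by rw [Set.indicator_of_mem (Finset.mem_coe.2 hj)]
  have htail (ω : Ω) : Y ω - ∑ j ∈ s, X j ω • v j =
      seriesMap v ((s : Set ℕ)ᶜ.indicator fun j => X j ω) := by
    have hcompl := (s.hasSum fun j => X j ω • v j).hasSum_iff_compl.1 (hsum ω)
    refine (seriesMap_eq_of_hasSum ?_).symm
    convert hasSum_subtype_iff_indicator.1 hcompl using 2 with j
    exact (Set.indicator_smul_apply_left _ _ _ _).symm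
  have hmeas : Measurable fun x : ℕ → ℝ => ∑ j ∈ s, x j • v j :=
    Continuous.measurable (by fun_prop)
  rw [funext hhead, funext htail]
  exact (indepFun_indicator_compl hX hind s).comp hmeas (measurable_seriesMap v)

lemma hasLaw_infinitePi_of_hasSum [IsProbabilityMeasure P] {X : ℕ → ℕ → Ω → ℝ}
    {Y : ℕ → Ω → E} (hX : ∀ n j, Measurable (X n j))
    (hind : iIndepFun (fun q : ℕ × ℕ => X q.1 q.2) P) (hlaw : ∀ n j, P.map (X n j) = P.map (X 0 j))
    (hsum : ∀ n ω, HasSum (fun j => X n j ω • v j) (Y n ω)) :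
    HasLaw (fun ω n => Y n ω) (Measure.infinitePi fun _ => P.map (Y 0)) P := by
  have hY (n : ℕ) : Y n = seriesMap v ∘ fun ω j => X n j ω :=
    funext fun ω => (seriesMap_eq_of_hasSum (hsum n ω)).symm
  have hrow (n : ℕ) : P.map (fun ω j => X n j ω) = Measure.infinitePi fun j => P.map (X n j) :=
    (hind.precomp (Prod.mk_right_injective n)).map_fun_eq_infinitePi_map (hX n)
  have hYlaw (n : ℕ) : P.map (Y n) = P.map (Y 0) := by
    have hmap (n : ℕ) := Measure.map_map (μ := P) (measurable_seriesMap v)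
      (measurable_pi_lambda _ (hX n))
    rw [hY, hY, ← hmap, ← hmap, hrow, hrow, funext (hlaw n)]
  have hYind : iIndepFun Y P := by
    rw [funext hY]
    exact (iIndepFun_pi_of_iIndepFun_prod hX hind).comp _ fun _ => measurable_seriesMap v
  have hYm (n : ℕ) : Measurable (Y n) := measurable_of_hasSum_smul (hX n) (hsum n)
  exact hYind.hasLaw_infinitePi (fun n => ⟨(hYm n).aemeasurable, hYlaw n⟩)
    (measurable_pi_lambda _ hYm).aemeasurable

variable [SecondCountableTopology E] [IsProbabilityMeasure P]

lemma translationBound_map_of_hasSum (hX : ∀ j, Measurable (X j)) (hind : iIndepFun X P)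
    (hsum : ∀ ω, HasSum (fun j => X j ω • v j) (Y ω)) {j : ℕ} {s c : ℝ}
    (h : TranslationBound (P.map (X j)) s c) : TranslationBound (P.map Y) (s • v j) c := by
  have hYm : Measurable Y := measurable_of_hasSum_smul hX hsum
  have hsmul : Measurable fun x : ℝ => x • v j := measurable_id.smul_const _
  have hXv : Measurable fun ω => X j ω • v j := hsmul.comp (hX j)
  have hsplit : IndepFun (fun ω => Y ω - X j ω • v j) (fun ω => X j ω • v j) P := by
    simpa only [Finset.sum_singleton] using (indepFun_sum_sub_sum hX hind hsum {j}).symm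
  have hlaw : P.map Y = P.map (fun ω => Y ω - X j ω • v j) ∗ (P.map (X j)).map (· • v j) := by
    rw [Measure.map_map hsmul (hX j)]
    refine Eq.trans ?_ (hsplit.map_add_eq_map_conv_map (hYm.sub hXv) hXv)
    exact congrArg P.map (funext fun ω => (sub_add_cancel _ _).symm)
  have := Measure.isProbabilityMeasure_map (μ := P) (hYm.sub hXv).aemeasurable
  rw [hlaw]
  exact (h.map (smulAddHom ℝ E |>.flip (v j)) hsmul).conv_left _

lemma zero_mem_msupp_map_of_hasSum (hX : ∀ j, Measurable (X j)) (hind : iIndepFun X P)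
    (hsum : ∀ ω, HasSum (fun j => X j ω • v j) (Y ω)) (h0 : ∀ j, 0 ∈ msupp (P.map (X j))) :
    0 ∈ msupp (P.map Y) := by
  have hYm : Measurable Y := measurable_of_hasSum_smul hX hsum
  intro U hU
  obtain ⟨ε, hε, hεU⟩ := Metric.mem_nhds_iff.1 hU
  obtain ⟨N, hN⟩ := exists_measure_norm_sub_sum_range_pos (P := P) hsum (half_pos hε)
  set head : Ω → E := fun ω => ∑ j ∈ Finset.range N, X j ω • v j
  have hhead : 0 < P (head ⁻¹' Metric.ball 0 (ε / 2)) :=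
    measure_preimage_sum_smul_pos hX hind h0 N (Metric.ball_mem_nhds 0 (half_pos hε))
      Metric.isOpen_ball.measurableSet
  have hsub : head ⁻¹' Metric.ball 0 (ε / 2) ∩
      (fun ω => Y ω - head ω) ⁻¹' Metric.ball 0 (ε / 2) ⊆ Y ⁻¹' U := by
    rintro ω ⟨hω, hω'⟩
    refine hεU (mem_ball_zero_iff.2 ?_)
    rw [Set.mem_preimage, mem_ball_zero_iff] at hω hω'
    calc ‖Y ω‖ = ‖(Y ω - head ω) + head ω‖ := by rw [sub_add_cancel]
      _ ≤ ‖Y ω - head ω‖ + ‖head ω‖ := norm_add_le _ _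
      _ < ε := by linarith
  calc 0 < P (head ⁻¹' Metric.ball 0 (ε / 2)) *
        P ((fun ω => Y ω - head ω) ⁻¹' Metric.ball 0 (ε / 2)) := by
        refine ENNReal.mul_pos hhead.ne' ?_
        simpa only [Set.preimage, mem_ball_zero_iff] using hN.ne'
    _ = P (head ⁻¹' Metric.ball 0 (ε / 2) ∩
          (fun ω => Y ω - head ω) ⁻¹' Metric.ball 0 (ε / 2)) :=
        ((indepFun_sum_sub_sum hX hind hsum _).measure_inter_preimage_eq_mul _ _
          Metric.isOpen_ball.measurableSet Metric.isOpen_ball.measurableSet).symm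
    _ ≤ P (Y ⁻¹' U) := measure_mono hsub
    _ ≤ P.map Y U := Measure.le_map_apply hYm.aemeasurable U

end Series

/-! ### The noise under Condition (D) -/

lemma abs_repr_le_norm {E : Type*} [NormedAddCommGroup E] [InnerProductSpace ℝ E]
    (e : HilbertBasis ℕ ℝ E) (w : E) (j : ℕ) : |e.repr w j| ≤ ‖w‖ := by
  rw [← Real.norm_eq_abs, ← e.repr.norm_map w]
  exact lp.norm_apply_le_norm two_ne_zero _ j

section CondD

variable {E : Type} [NormedAddCommGroup E] [InnerProductSpace ℝ E] [MeasurableSpace E]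
  {Ω : Type*} [MeasurableSpace Ω] {P : Measure Ω}
  {e : HilbertBasis ℕ ℝ E} {η : ℕ → Ω → E} {b : ℕ → ℝ} {ξ : ℕ → ℕ → Ω → ℝ} {p : ℕ → ℝ → ℝ}

lemma CondD.hasSum_smul (hD : CondD P e η b ξ p) (k : ℕ) (ω : Ω) :
    HasSum (fun j => ξ j k ω • b j • (e j : E)) (η k ω) := by
  obtain ⟨-, -, hsum, -⟩ := hD
  simpa only [smul_smul, mul_comm (b _)] using hsum k ω

lemma CondD.iIndepFun_coeff (hD : CondD P e η b ξ p) (k : ℕ) :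
    iIndepFun (fun j => ξ j k) P := by
  obtain ⟨-, -, -, -, hind, -⟩ := hD
  exact hind.precomp (g := fun j => (j, k)) (Prod.mk_left_injective k)

variable [CompleteSpace E] [BorelSpace E]

lemma CondD.measurable (hD : CondD P e η b ξ p) (k : ℕ) : Measurable (η k) := by
  have hsum := hD.hasSum_smul k
  obtain ⟨-, -, -, hξ, -⟩ := hD
  exact measurable_of_hasSum_smul (hξ · k) hsum

variable [IsProbabilityMeasure P]

lemma CondD.hasLaw_infinitePi (hD : CondD P e η b ξ p) :
    HasLaw (fun ω n => η (n + 1) ω) (Measure.infinitePi fun _ => P.map (η 1)) P := by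
  have hsum := hD.hasSum_smul
  obtain ⟨-, -, -, hξ, hind, hlaw, -⟩ := hD
  have hinj : Function.Injective fun q : ℕ × ℕ => (q.2, q.1 + 1) := by
    rintro ⟨n, j⟩ ⟨n', j'⟩ h
    simpa [and_comm] using h
  exact hasLaw_infinitePi_of_hasSum (X := fun n j => ξ j (n + 1)) (fun n j => hξ j _)
    (hind.precomp hinj) (fun n j => by rw [hlaw, hlaw]) fun n => hsum (n + 1)

variable [SecondCountableTopology E]

lemma CondD.zero_mem_msupp (hD : CondD P e η b ξ p) : 0 ∈ msupp (P.map (η 1)) := by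
  have hsum := hD.hasSum_smul 1
  have hind := hD.iIndepFun_coeff 1
  obtain ⟨-, -, -, hξ, -, hlaw, hLip, hp0, -⟩ := hD
  refine zero_mem_msupp_map_of_hasSum (hξ · 1) hind hsum fun j => ?_
  obtain ⟨L, hL⟩ := hLip j
  rw [hlaw]
  exact mem_msupp_withDensity hL.continuous (hp0 j)

lemma CondD.exists_translationBound_smul (hD : CondD P e η b ξ p) {j : ℕ} (hb : b j ≠ 0) :
    ∃ C : ℝ, 0 ≤ C ∧ ∀ t : ℝ, TranslationBound (P.map (η 1)) (t • (e j : E)) (C * |t|) := by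
  have hsum := hD.hasSum_smul 1
  have hind := hD.iIndepFun_coeff 1
  obtain ⟨-, -, -, hξ, -, hlaw, hLip, -, hps⟩ := hD
  obtain ⟨L, hL⟩ := hLip j
  refine ⟨2 * L * |b j|⁻¹, by positivity, fun t => ?_⟩
  have hcoeff : TranslationBound (P.map (ξ j 1)) (t / b j) (2 * L * |b j|⁻¹ * |t|) := by
    rw [hlaw]
    refine (translationBound_withDensity hL (hps j) (t / b j)).mono (le_of_eq ?_)
    rw [abs_div]
    ring
  simpa only [smul_smul, div_mul_cancel₀ t hb] using
    translationBound_map_of_hasSum (hξ · 1) hind hsum hcoeff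

lemma CondD.exists_translationBound_projB (hD : CondD P e η b ξ p) (hb : ∀ j, b j ≠ 0) (N : ℕ) :
    ∃ C : ℝ, 0 ≤ C ∧ ∀ w : E, TranslationBound (P.map (η 1)) (projB e N w) (C * ‖w‖) := by
  choose C hC0 hC using fun j => hD.exists_translationBound_smul (hb j)
  refine ⟨∑ j ∈ Finset.range N, C j, Finset.sum_nonneg fun j _ => hC0 j, fun w => ?_⟩
  rw [Finset.sum_mul]
  refine translationBound_sum _ (fun j => mul_nonneg (hC0 j) (norm_nonneg w)) fun j => ?_
  exact (hC j _).mono (mul_le_mul_of_nonneg_left (abs_repr_le_norm e w j) (hC0 j))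

end CondD

/-! ### The domain of attainability -/

section Attain

variable {E : Type*} [AddCommGroup E] {S : E → E} {K B : Set E} {u v w x h : E} {m n : ℕ}

lemma add_mem_attain_succ (hu : u ∈ attain S K B n) (hh : h ∈ K) :
    S u + h ∈ attain S K B (n + 1) :=
  Set.add_mem_add (Set.mem_image_of_mem S hu) hh

lemma mem_attain_add (hw : w ∈ attain S K B n) (hx : x ∈ attain S K {w} m) :
    x ∈ attain S K B (n + m) := by
  induction m generalizing x with
  | zero => rwa [Set.mem_singleton_iff.1 hx]
  | succ m ih =>
    obtain ⟨_, ⟨y, hy, rfl⟩, h, hh, rfl⟩ := hx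
    exact add_mem_attain_succ (ih hy) hh

lemma iterate_mem_attain (h0 : 0 ∈ K) (v : E) (n : ℕ) : S^[n] v ∈ attain S K {v} n := by
  induction n with
  | zero => rfl
  | succ n ih => simpa only [Function.iterate_succ_apply', add_zero] using add_mem_attain_succ ih h0

lemma monotone_attain_zero (hS0 : S 0 = 0) (h0 : 0 ∈ K) : Monotone (attain S K {0}) := by
  refine monotone_nat_of_le_succ fun n => ?_
  induction n with
  | zero =>
    rintro _ rfl
    simpa only [hS0, add_zero] using
      add_mem_attain_succ (S := S) (n := 0) (Set.mem_singleton (0 : E)) h0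
  | succ n ih => exact Set.add_subset_add_right (Set.image_mono ih)

variable [TopologicalSpace E] [ContinuousAdd E]

lemma eventually_attain_inter_nonempty (hS : Continuous S) (hx : x ∈ attain S K {u} m)
    {U : Set E} (hU : U ∈ 𝓝 x) : ∀ᶠ v in 𝓝 u, (attain S K {v} m ∩ U).Nonempty := by
  induction m generalizing x U with
  | zero =>
    obtain rfl : x = u := hx
    filter_upwards [hU] with v hv using ⟨v, rfl, hv⟩
  | succ m ih =>
    obtain ⟨_, ⟨y, hy, rfl⟩, h, hh, rfl⟩ := hx
    have hcont : Continuous fun z => S z + h := by fun_prop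
    filter_upwards [ih hy (hcont.continuousAt hU)] with v ⟨w, hw, hwU⟩
    exact ⟨S w + h, add_mem_attain_succ hw hh, hwU⟩

lemma add_mem_attainDom (hS : Continuous S) (hu : u ∈ attainDom S K B) (hh : h ∈ K) :
    S u + h ∈ attainDom S K B := by
  refine map_mem_closure (f := fun z => S z + h) (by fun_prop) hu fun z hz => ?_
  obtain ⟨n, hn⟩ := Set.mem_iUnion.1 hz
  exact Set.mem_iUnion.2 ⟨n + 1, add_mem_attain_succ hn hh⟩

/- The noiseless trajectory of `v` comes close to `0`, after which the controls that steer `0`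
to `x` steer it close to `x`. -/
lemma attainDom_zero_subset_attainDom (hS : Continuous S) (h0 : 0 ∈ K)
    (hv : 0 ∈ closure (Set.range fun n => S^[n] v)) :
    attainDom S K {0} ⊆ attainDom S K {v} := by
  refine closure_minimal (Set.iUnion_subset fun m x hx => ?_) isClosed_closure
  refine mem_closure_iff_nhds.2 fun U hU => ?_
  obtain ⟨_, ⟨w, hw, hwU⟩, n, rfl⟩ :=
    mem_closure_iff_nhds.1 hv _ (eventually_attain_inter_nonempty hS hx hU)
  exact ⟨w, hwU, Set.mem_iUnion.2 ⟨n + m, mem_attain_add (iterate_mem_attain h0 v n) hw⟩⟩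

end Attain

lemma isCompact_attainDom_zero {E : Type*} [NormedAddCommGroup E] [CompleteSpace E] {S : E → E}
    {K D : Set E} (hK : IsCompact K) (hS0 : S 0 = 0) (h0 : 0 ∈ K) (hD : attainDom S K {0} ⊆ D)
    (hSD : TotallyBounded (S '' D)) : IsCompact (attainDom S K {0}) := by
  have hcompact : IsCompact (closure (S '' D) + K) :=
    (hSD.closure.isCompact_of_isClosed isClosed_closure).add hK
  refine hcompact.of_isClosed_subset isClosed_closure (closure_minimal ?_ hcompact.isClosed)
  refine Set.iUnion_subset fun n => (monotone_attain_zero hS0 h0 n.le_succ).trans ?_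
  have hn : attain S K {0} n ⊆ D :=
    ((Set.subset_iUnion (attain S K {0}) n).trans subset_closure).trans hD
  exact Set.add_subset_add_right ((Set.image_mono hn).trans subset_closure)

lemma CondB.exists_attainDom_subset_closedBall {E : Type} [NormedAddCommGroup E] {S : E → E}
    {K : Set E} (hB : CondB S K) (hS0 : S 0 = 0) (h0 : 0 ∈ K) :
    ∃ ρ : ℝ, 0 < ρ ∧ attainDom S K {0} ⊆ Metric.closedBall 0 ρ := by
  obtain ⟨ρ, hρ, k₀, -, hk⟩ := hB
  refine ⟨ρ, hρ, closure_minimal (Set.iUnion_subset fun n => ?_) Metric.isClosed_closedBall⟩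
  have hball := hk 0 le_rfl (max n (k₀ 0)) (le_max_right _ _)
  rw [Metric.closedBall_zero] at hball
  exact (monotone_attain_zero hS0 h0 (le_max_left n (k₀ 0))).trans hball

section Squeezing

variable {E : Type} [NormedAddCommGroup E] [InnerProductSpace ℝ E]

lemma totallyBounded_of_projB (e : HilbertBasis ℕ ℝ E) {s : Set E} {C : ℝ}
    (hs : ∀ x ∈ s, ‖x‖ ≤ C) (htail : ∀ ε > 0, ∃ N, ∀ x ∈ s, ‖x - projB e N x‖ < ε) :
    TotallyBounded s := by
  refine Metric.totallyBounded_iff.2 fun ε hε => ?_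
  obtain ⟨N, hN⟩ := htail (ε / 2) (half_pos hε)
  let combo : (ℕ → ℝ) → E := fun c => ∑ j ∈ Finset.range N, c j • (e j : E)
  have hcompact : IsCompact (combo '' Set.univ.pi fun _ => Set.Icc (-C) C) :=
    (isCompact_univ_pi fun _ => isCompact_Icc).image (by fun_prop)
  obtain ⟨t, ht, hcover⟩ := Metric.totallyBounded_iff.1 hcompact.totallyBounded _ (half_pos hε)
  refine ⟨t, ht, fun x hx => ?_⟩
  have hproj : projB e N x ∈ combo '' Set.univ.pi fun _ => Set.Icc (-C) C :=
    ⟨fun j => e.repr x j, fun j _ => abs_le.1 ((abs_repr_le_norm e x j).trans (hs x hx)), rfl⟩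
  obtain ⟨y, hy, hxy⟩ := Set.mem_iUnion₂.1 (hcover hproj)
  refine Set.mem_iUnion₂.2 ⟨y, hy, ?_⟩
  have hxN := hN x hx
  rw [← dist_eq_norm] at hxN
  rw [Metric.mem_ball] at hxy ⊢
  linarith [dist_triangle x (projB e N x) y]

lemma CondC.totallyBounded_image {S : E → E} {e : HilbertBasis ℕ ℝ E} (hC : CondC S e)
    (hS0 : S 0 = 0) {ρ C : ℝ} (hρ : 0 < ρ) (hSC : ∀ u ∈ Metric.closedBall (0 : E) ρ, ‖S u‖ ≤ C) :
    TotallyBounded (S '' Metric.closedBall 0 ρ) := by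
  refine totallyBounded_of_projB e (Set.forall_mem_image.2 hSC) fun ε hε => ?_
  obtain ⟨γ, hγ0, -, hγ, hsqueeze⟩ := hC ρ hρ
  obtain ⟨N, hN⟩ := (hγ.eventually_lt_const (div_pos hε hρ)).exists
  refine ⟨N, Set.forall_mem_image.2 fun u hu => ?_⟩
  have hu0 := hsqueeze N u hu 0 (Metric.mem_closedBall_self hρ.le)
  rw [hS0, sub_zero, sub_zero] at hu0
  calc ‖S u - projB e N (S u)‖ ≤ γ N * ‖u‖ := hu0
    _ ≤ γ N * ρ := mul_le_mul_of_nonneg_left (mem_closedBall_zero_iff.1 hu) (hγ0 N).le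
    _ < ε := (lt_div_iff₀ hρ).1 hN

end Squeezing

/-! ### The model -/

section Stable

variable {E : Type*} [NormedAddCommGroup E] {S : E → E}

/-- Condition (A) without the differentiability of `S`. -/
def LipschitzStable (S : E → E) : Prop :=
  ∀ R r : ℝ, 0 < r → r < R →
    ∃ C : ℝ, 0 < C ∧ ∃ a : ℝ, 0 < a ∧ a < 1 ∧ ∃ n₀ : ℕ, 1 ≤ n₀ ∧
      (∀ u₁ ∈ Metric.closedBall (0 : E) R, ∀ u₂ ∈ Metric.closedBall (0 : E) R,
          ‖S u₁ - S u₂‖ ≤ C * ‖u₁ - u₂‖) ∧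
      ∀ u ∈ Metric.closedBall (0 : E) R, ∀ n : ℕ, n₀ ≤ n →
          ‖S^[n] u‖ ≤ max (a * ‖u‖) r

lemma LipschitzStable.exists_norm_sub_le (hA : LipschitzStable S) {R : ℝ} (hR : 0 < R) :
    ∃ C : ℝ, 0 ≤ C ∧ ∀ u₁ ∈ Metric.closedBall (0 : E) R, ∀ u₂ ∈ Metric.closedBall (0 : E) R,
      ‖S u₁ - S u₂‖ ≤ C * ‖u₁ - u₂‖ := by
  obtain ⟨C, hC, -, -, -, -, -, hLip, -⟩ := hA R (R / 2) (half_pos hR) (half_lt_self hR)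
  exact ⟨C, hC.le, hLip⟩

lemma LipschitzStable.continuous (hA : LipschitzStable S) : Continuous S := by
  refine continuous_iff_continuousAt.2 fun u => ?_
  obtain ⟨C, hC, hLip⟩ := hA.exists_norm_sub_le (R := ‖u‖ + 1) (by positivity)
  have hon : LipschitzOnWith (Real.toNNReal C) S (Metric.closedBall 0 (‖u‖ + 1)) :=
    LipschitzOnWith.of_dist_le_mul fun x hx y hy => by
      simpa only [dist_eq_norm, Real.coe_toNNReal C hC] using hLip x hx y hy
  refine hon.continuousOn.continuousAt ?_
  refine Metric.closedBall_mem_nhds_of_mem ?_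
  rw [mem_ball_zero_iff]
  exact lt_add_one ‖u‖

lemma LipschitzStable.map_zero (hA : LipschitzStable S) : S 0 = 0 := by
  have hiter : Tendsto (fun n : ℕ => S^[n] 0) atTop (𝓝 0) := by
    refine Metric.tendsto_atTop.2 fun ε hε => ?_
    obtain ⟨-, -, a, -, -, n₀, -, -, h⟩ := hA ε (ε / 2) (half_pos hε) (half_lt_self hε)
    refine ⟨n₀, fun n hn => ?_⟩
    have hn0 := h 0 (Metric.mem_closedBall_self hε.le) n hn
    rw [norm_zero, mul_zero, max_eq_right (half_pos hε).le] at hn0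
    rw [dist_zero_right]
    exact hn0.trans_lt (half_lt_self hε)
  exact isFixedPt_of_tendsto_iterate hiter hA.continuous.continuousAt

lemma LipschitzStable.zero_mem_closure_range_iterate (hA : LipschitzStable S) (v : E) :
    0 ∈ closure (Set.range fun n => S^[n] v) := by
  refine Metric.mem_closure_range_iff.2 fun r hr => ?_
  obtain ⟨-, -, a, ha0, ha1, n₀, -, -, hstab⟩ :=
    hA (‖v‖ + r) (r / 2) (half_pos hr) (by linarith [norm_nonneg v])
  have hdecay (m : ℕ) : ‖S^[m * n₀] v‖ ≤ max (a ^ m * ‖v‖) (r / 2) := by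
    induction m with
    | zero => simp
    | succ m ih =>
      have hball : S^[m * n₀] v ∈ Metric.closedBall 0 (‖v‖ + r) := by
        refine mem_closedBall_zero_iff.2 (ih.trans (max_le ?_ (by linarith [norm_nonneg v])))
        linarith [mul_le_of_le_one_left (norm_nonneg v) (pow_le_one₀ (n := m) ha0.le ha1.le)]
      have hstep := hstab _ hball n₀ le_rfl
      rw [← Function.iterate_add_apply, add_comm, ← Nat.succ_mul] at hstep
      refine hstep.trans (max_le ?_ (le_max_right _ _))
      calc a * ‖S^[m * n₀] v‖ ≤ a * max (a ^ m * ‖v‖) (r / 2) :=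
            mul_le_mul_of_nonneg_left ih ha0.le
        _ = max (a ^ (m + 1) * ‖v‖) (a * (r / 2)) := by
            rw [mul_max_of_nonneg _ _ ha0.le, pow_succ', mul_assoc]
        _ ≤ max (a ^ (m + 1) * ‖v‖) (r / 2) :=
            max_le_max le_rfl (mul_le_of_le_one_left (half_pos hr).le ha1.le)
  have hlim : Tendsto (fun m : ℕ => a ^ m * ‖v‖) atTop (𝓝 0) := by
    simpa only [zero_mul] using
      (tendsto_pow_atTop_nhds_zero_of_lt_one ha0.le ha1).mul_const ‖v‖
  obtain ⟨m, hm⟩ := (hlim.eventually_lt_const hr).exists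
  refine ⟨m * n₀, ?_⟩
  rw [dist_zero_left]
  exact (hdecay m).trans_lt (max_lt hm (half_lt_self hr))

end Stable

section Model

variable {E : Type} [NormedAddCommGroup E] [InnerProductSpace ℝ E] [CompleteSpace E]
  [SecondCountableTopology E] [MeasurableSpace E] [BorelSpace E]
  {Ω : Type*} [MeasurableSpace Ω] {P : Measure Ω} [IsProbabilityMeasure P] {S : E → E}
  {e : HilbertBasis ℕ ℝ E} {η : ℕ → Ω → E} {b : ℕ → ℝ} {ξ : ℕ → ℕ → Ω → ℝ} {p : ℕ → ℝ → ℝ}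

/- Shifting the noise by the low modes of `S u - S u'` leaves only the high modes, which are
squeezed. -/
lemma exists_translationBound_norm_sub_le (hA : LipschitzStable S) (hC : CondC S e)
    (hD : CondD P e η b ξ p) (hb : ∀ j, b j ≠ 0) {ρ : ℝ} (hρ : 0 < ρ) {q : ℝ} (hq : 0 < q) :
    ∃ C : ℝ, 0 ≤ C ∧ ∀ u ∈ Metric.closedBall (0 : E) ρ, ∀ u' ∈ Metric.closedBall (0 : E) ρ,
      ∃ Δ : E, ‖S u - Δ - S u'‖ ≤ q * ‖u - u'‖ ∧
        TranslationBound (P.map (η 1)) Δ (C * ‖u - u'‖) := by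
  obtain ⟨L, hL0, hL⟩ := hA.exists_norm_sub_le hρ
  obtain ⟨γ, -, -, hγ, hsqueeze⟩ := hC ρ hρ
  obtain ⟨N, hN⟩ := (hγ.eventually_lt_const hq).exists
  obtain ⟨C, hC0, hCN⟩ := hD.exists_translationBound_projB hb N
  refine ⟨C * L, by positivity, fun u hu u' hu' => ⟨projB e N (S u - S u'), ?_, ?_⟩⟩
  · rw [sub_right_comm]
    exact (hsqueeze N u hu u' hu').trans (mul_le_mul_of_nonneg_right hN.le (norm_nonneg _))
  · refine (hCN (S u - S u')).mono ?_
    rw [mul_assoc]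
    exact mul_le_mul_of_nonneg_left (hL u hu u' hu') hC0

lemma isMixingChain_attainDom {K : Set E} (hK : K = msupp (P.map (η 1))) (hKcomp : IsCompact K)
    (hA : LipschitzStable S) (hB : CondB S K) (hC : CondC S e) (hD : CondD P e η b ξ p)
    (hb : ∀ j, b j ≠ 0) : IsMixingChain S (P.map (η 1)) (attainDom S K {0}) := by
  have h0 : 0 ∈ K := hK ▸ hD.zero_mem_msupp
  obtain ⟨ρ, hρ, hsub⟩ := hB.exists_attainDom_subset_closedBall hA.map_zero h0
  obtain ⟨L, hL0, hL⟩ := hA.exists_norm_sub_le hρ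
  have hbound (u : E) (hu : u ∈ Metric.closedBall (0 : E) ρ) : ‖S u‖ ≤ L * ρ := by
    have := hL u hu 0 (Metric.mem_closedBall_self hρ.le)
    rw [hA.map_zero, sub_zero, sub_zero] at this
    exact this.trans (mul_le_mul_of_nonneg_left (mem_closedBall_zero_iff.1 hu) hL0)
  exact
    { continuous := hA.continuous
      isCompact := isCompact_attainDom_zero hKcomp hA.map_zero h0 hsub
        (hC.totallyBounded_image hA.map_zero hρ hbound)
      nonempty := ⟨0, subset_closure (Set.mem_iUnion.2 ⟨0, rfl⟩)⟩
      ae_mem := fun u hu => by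
        filter_upwards [Measure.support_mem_ae] with h hh
        exact add_mem_attainDom hA.continuous hu (hK ▸ (Measure.mem_support_iff_forall h).1 hh)
      coupling := fun q hq => by
        obtain ⟨C, hC0, h⟩ := exists_translationBound_norm_sub_le hA hC hD hb hρ hq
        exact ⟨C, hC0, fun u hu u' hu' => h u (hsub hu) u' (hsub hu')⟩
      irreducible := fun v _ => hK ▸ attainDom_zero_subset_attainDom hA.continuous h0
        (hA.zero_mem_closure_range_iterate v) }

end Model

section Trajectories

variable {E : Type*} [NormedAddCommGroup E] [MeasurableSpace E] {S : E → E}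

lemma occ_path (u : E) (y : ℕ → E) (k : ℕ) :
    occ (path S u y) k = empirical ⟨fun x => x 0, continuous_apply 0⟩ k (path S u y) := by
  simp only [empirical, seqShift_iterate, ContinuousMap.coe_mk, add_zero]

lemma occ_shift_path (u : E) (y : ℕ → E) (k : ℕ) :
    occ (fun n j => path S u y (n + j)) k = empirical (.id _) k (path S u y) := by
  simp only [empirical, seqShift_iterate, ContinuousMap.id_apply]

end Trajectories

lemma traj_const_eq_path {E : Type} [NormedAddCommGroup E] {Ω : Type*} (S : E → E)
    (η : ℕ → Ω → E) (u : E) (n : ℕ) (ω : Ω) :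
    traj S η (fun _ => u) n ω = path S u (fun n => η (n + 1) ω) n := by
  induction n with
  | zero => rfl
  | succ n ih => exact congrArg (S · + η (n + 1) ω) ih

theorem statement5_general
    {H : Type} [NormedAddCommGroup H] [InnerProductSpace ℝ H] [CompleteSpace H]
    [SecondCountableTopology H] [MeasurableSpace H] [BorelSpace H]
    {Ω : Type*} [MeasurableSpace Ω] (P : Measure Ω) [IsProbabilityMeasure P]
    (S : H → H) (e : HilbertBasis ℕ ℝ H)
    (η : ℕ → Ω → H) (b : ℕ → ℝ) (ξ : ℕ → ℕ → Ω → ℝ) (p : ℕ → ℝ → ℝ)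
    (K : Set H) (hK : K = msupp (Measure.map (η 1) P)) (hKcomp : IsCompact K)
    (hA : LipschitzStable S) (hB : CondB S K) (hC : CondC S e) (hD : CondD P e η b ξ p)
    (hb : ∀ j, b j ≠ 0) :
    (∃ Q : (H →ᵇ ℝ) → ℝ,
      (∀ V : H →ᵇ ℝ, ∀ u ∈ attainDom S K ({0} : Set H),
        Tendsto (fun k : ℕ => (k : ℝ)⁻¹ *
            Real.log (∫ ω,
              Real.exp (∑ n ∈ Finset.Icc 1 k, V (traj S η (fun _ => u) n ω)) ∂P))
          atTop (𝓝 (Q V))) ∧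
      GoodRate (fun σ : ProbabilityMeasure H =>
        ⨆ V : H →ᵇ ℝ, ENNReal.ofReal ((∫ x, V x ∂(σ : Measure H)) - Q V)) ∧
      UnifLDPof
        (fun k Γ => ⨅ u ∈ attainDom S K ({0} : Set H),
          P {ω | occ (fun n => traj S η (fun _ => u) n ω) k ∈ Γ})
        (fun k Γ => ⨆ u ∈ attainDom S K ({0} : Set H),
          P {ω | occ (fun n => traj S η (fun _ => u) n ω) k ∈ Γ})
        (fun σ : ProbabilityMeasure H =>
          ⨆ V : H →ᵇ ℝ, ENNReal.ofReal ((∫ x, V x ∂(σ : Measure H)) - Q V))) ∧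
    ∃ I : ProbabilityMeasure (ℕ → H) → ℝ≥0∞,
      GoodRate I ∧
      (∀ u ∈ attainDom S K ({0} : Set H),
        LDPof
          (fun k F =>
            P {ω | occ (fun n (j : ℕ) => traj S η (fun _ => u) (n + j) ω) k ∈ F}) I) ∧
      UnifLDPof
        (fun k Γ => ⨅ u ∈ attainDom S K ({0} : Set H),
          P {ω | occ (fun n (j : ℕ) => traj S η (fun _ => u) (n + j) ω) k ∈ Γ})
        (fun k Γ => ⨆ u ∈ attainDom S K ({0} : Set H),
          P {ω | occ (fun n (j : ℕ) => traj S η (fun _ => u) (n + j) ω) k ∈ Γ})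
        I := by
  have hchain := isMixingChain_attainDom hK hKcomp hA hB hC hD hb
  have hY := hD.hasLaw_infinitePi
  have := Measure.isProbabilityMeasure_map (μ := P) (hD.measurable 1).aemeasurable
  simp only [traj_const_eq_path, occ_path, occ_shift_path]
  obtain ⟨Q, hQ⟩ := hchain.exists_isPressure ⟨fun x => x 0, continuous_apply 0⟩
  obtain ⟨Q', hQ'⟩ := hchain.exists_isPressure (.id (ℕ → H))
  have hunif := hQ'.unifLDPof hchain hY
  exact ⟨⟨Q, fun V u hu => hQ.tendsto_inv_mul_log_integral_exp hA.continuous.measurable hY V hu,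
      hQ.goodRate hchain, hQ.unifLDPof hchain hY⟩,
    legendreRate Q', hQ'.goodRate hchain, fun u hu => hunif.ldpOf hu, hunif⟩

/-- **Theorem 1.4 (uniform LDP)**: under Conditions (A)–(D) with `b_j ≠ 0`, the occupation
measures `ζ_k(u)` of the trajectories issued from deterministic points `u ∈ 𝒜`, and the
corresponding process-level occupation measures `𝜻_k(u)` on `𝐇 = H^{ℤ₊}`, satisfy the
uniform LDP with the good rate functions `I` and `𝐈` of the non-uniform LDPs. -/
theorem statement5
    {H : Type} [NormedAddCommGroup H] [InnerProductSpace ℝ H] [CompleteSpace H]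
    [SecondCountableTopology H] [MeasurableSpace H] [BorelSpace H]
    {Ω : Type} [MeasurableSpace Ω] (P : Measure Ω) [IsProbabilityMeasure P]
    (S : H → H) (e : HilbertBasis ℕ ℝ H)
    (η : ℕ → Ω → H) (hηmeas : ∀ k, Measurable (η k))
    (b : ℕ → ℝ) (ξ : ℕ → ℕ → Ω → ℝ) (p : ℕ → ℝ → ℝ)
    (K : Set H) (hK : K = msupp (Measure.map (η 1) P)) (hKcomp : IsCompact K)
    (hA : CondA S) (hB : CondB S K) (hC : CondC S e) (hD : CondD P e η b ξ p)
    (hb : ∀ j, b j ≠ 0) :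
    -- uniform LDP for the occupation measures `ζ_k(u)` with the rate function
    -- `I(σ) = sup_V (⟨V,σ⟩ - Q(V))`, `Q(V) = lim_k k⁻¹ log 𝔼_u exp(∑_{n=1}^k V(u_n))`
    (∃ Q : (H →ᵇ ℝ) → ℝ,
      (∀ V : H →ᵇ ℝ, ∀ u ∈ attainDom S K ({0} : Set H),
        Tendsto (fun k : ℕ => (k : ℝ)⁻¹ *
            Real.log (∫ ω,
              Real.exp (∑ n ∈ Finset.Icc 1 k, V (traj S η (fun _ => u) n ω)) ∂P))
          atTop (𝓝 (Q V))) ∧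
      GoodRate (fun σ : ProbabilityMeasure H =>
        ⨆ V : H →ᵇ ℝ, ENNReal.ofReal ((∫ x, V x ∂(σ : Measure H)) - Q V)) ∧
      UnifLDPof
        (fun k Γ => ⨅ u ∈ attainDom S K ({0} : Set H),
          P {ω | occ (fun n => traj S η (fun _ => u) n ω) k ∈ Γ})
        (fun k Γ => ⨆ u ∈ attainDom S K ({0} : Set H),
          P {ω | occ (fun n => traj S η (fun _ => u) n ω) k ∈ Γ})
        (fun σ : ProbabilityMeasure H =>
          ⨆ V : H →ᵇ ℝ, ENNReal.ofReal ((∫ x, V x ∂(σ : Measure H)) - Q V))) ∧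
    -- uniform LDP for the process-level occupation measures `𝜻_k(u)` with the good rate
    -- function `𝐈` of the process-level LDP
    ∃ I : ProbabilityMeasure (ℕ → H) → ℝ≥0∞,
      GoodRate I ∧
      (∀ u ∈ attainDom S K ({0} : Set H),
        LDPof
          (fun k F =>
            P {ω | occ (fun n (j : ℕ) => traj S η (fun _ => u) (n + j) ω) k ∈ F}) I) ∧
      UnifLDPof
        (fun k Γ => ⨅ u ∈ attainDom S K ({0} : Set H),
          P {ω | occ (fun n (j : ℕ) => traj S η (fun _ => u) (n + j) ω) k ∈ Γ})
        (fun k Γ => ⨆ u ∈ attainDom S K ({0} : Set H),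
          P {ω | occ (fun n (j : ℕ) => traj S η (fun _ => u) (n + j) ω) k ∈ Γ})
        I := by
  exact statement5_general P S e η b ξ p K hK hKcomp hA.2 hB hC hD hb
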